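/- arXiv:1205.2542 — 2 statements merged into one kernel-verified Lean document; each statement's English description precedes it below -/
import Mathlib

section
/- For every n ∈ ℤ and every locally integrable f with ‖f‖_{bmo_n} < ∞, the following are equivalent: (a) f ∈ vmo_n(ℝ^d); (b) for every ε > 0 there exists φ ∈ C_c^∞(ℝ^d) with ‖f − φ‖_{bmo_n} < ε. -/
open MeasureTheory Metric Real Filter Topology NNReal ENNReal

noncomputable section

abbrev E (d : ℕ) := EuclideanSpace ℝ (Fin d)

/-- The auxiliary function ρ associated with the potential `V`. -/
def rho (d : ℕ) (V : E d → ℝ) (x : E d) : ℝ :=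
  sSup {r : ℝ | 0 < r ∧ r ^ ((2:ℝ) - (d:ℝ)) * (∫ y in ball x r, V y) ≤ 1}

/-- The reverse Hölder class `RH_{d/2}`. -/
def IsRH (d : ℕ) (V : E d → ℝ) : Prop :=
  ∃ C : ℝ, 0 < C ∧ ∀ (x : E d) (r : ℝ), 0 < r →
    ((volume (ball x r)).toReal⁻¹ * ∫ y in ball x r, (V y) ^ ((d:ℝ)/2)) ^ ((2:ℝ)/(d:ℝ)) ≤
      C * ((volume (ball x r)).toReal⁻¹ * ∫ y in ball x r, V y)

/-- The set `𝓑_n = {x : 2^{-(n+1)/2} < ρ(x) ≤ 2^{-n/2}}`. -/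
def Bset (d : ℕ) (V : E d → ℝ) (n : ℤ) : Set (E d) :=
  {x | (2:ℝ) ^ (-((n:ℝ)+1)/2) < rho d V x ∧ rho d V x ≤ (2:ℝ) ^ (-(n:ℝ)/2)}

/-- Average of `f` over the ball `B(x,r)`. -/
def ballAvg (d : ℕ) (f : E d → ℝ) (x : E d) (r : ℝ) : ℝ :=
  (volume (ball x r)).toReal⁻¹ * ∫ y in ball x r, f y

/-- Mean oscillation of `f` over the ball `B(x,r)`. -/
def oscB (d : ℕ) (f : E d → ℝ) (x : E d) (r : ℝ) : ℝ :=
  ballAvg d (fun y => |f y - ballAvg d f x r|) x r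

/-- The BMO seminorm, as an extended nonnegative real. -/
def bmoNormE (d : ℕ) (f : E d → ℝ) : ℝ≥0∞ :=
  ⨆ (x : E d) (r : ℝ) (_ : 0 < r), ENNReal.ofReal (oscB d f x r)

/-- The `bmo_n` norm, as an extended nonnegative real. -/
def bmonNorm (d : ℕ) (n : ℤ) (f : E d → ℝ) : ℝ≥0∞ :=
  bmoNormE d f +
    ⨆ (x : E d) (r : ℝ) (_ : (2:ℝ) ^ (-(n:ℝ)/2) ≤ r),
      ENNReal.ofReal (ballAvg d (fun y => |f y|) x r)

/-- The `BMO_L` norm, as an extended nonnegative real. -/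
def bmoLNorm (d : ℕ) (V : E d → ℝ) (f : E d → ℝ) : ℝ≥0∞ :=
  bmoNormE d f +
    ⨆ (x : E d) (r : ℝ) (_ : rho d V x ≤ r),
      ENNReal.ofReal (ballAvg d (fun y => |f y|) x r)

/-- The Gauss function `P(x) = (4π)^{-d/2} e^{-|x|²/4}`. -/
def gaussP (d : ℕ) (x : E d) : ℝ := (4 * π) ^ (-(d:ℝ)/2) * Real.exp (-(‖x‖^2)/4)

/-- The local maximal function `𝓜_n f(x) = sup_{0<t<2^{-n/2}} |P_t * f(x)|`. -/
def MnMax (d : ℕ) (n : ℤ) (f : E d → ℝ) (x : E d) : ℝ≥0∞ :=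
  ⨆ (t : ℝ) (_ : 0 < t ∧ t < (2:ℝ) ^ (-(n:ℝ)/2)),
    ENNReal.ofReal |∫ z, t ^ (-(d:ℝ)) * gaussP d (t⁻¹ • (x - z)) * f z|

/-- The `h^1_n` norm `‖𝓜_n f‖_{L¹}`, as an extended nonnegative real. -/
def h1nNorm (d : ℕ) (n : ℤ) (f : E d → ℝ) : ℝ≥0∞ := ∫⁻ x, MnMax d n f x

/-- Membership in the local Hardy space `h^1_n`. -/
def Memh1n (d : ℕ) (n : ℤ) (f : E d → ℝ) : Prop :=
  Integrable f volume ∧ h1nNorm d n f < ⊤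

/-- `(H^1_L, q)`-atoms related to the ball `B(x₀, r)`, with `L`-constant `CL`. -/
def IsHLAtom (d : ℕ) (V : E d → ℝ) (CL : ℝ) (q : ℝ≥0∞) (a : E d → ℝ) (x₀ : E d) (r : ℝ) :
    Prop :=
  r ≤ CL * rho d V x₀ ∧ Function.support a ⊆ ball x₀ r ∧
    eLpNorm a q volume ≤ (volume (ball x₀ r)) ^ (1 / q.toReal - 1) ∧
    (r ≤ rho d V x₀ / CL → (∫ x, a x) = 0)

lemma vol_pos (d : ℕ) (x : E d) {r : ℝ} (hr : 0 < r) : 0 < (volume (ball x r)).toReal :=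
  ENNReal.toReal_pos (measure_ball_pos _ _ hr).ne' measure_ball_lt_top.ne

lemma vol_center (d : ℕ) (x y : E d) (r : ℝ) :
    (volume (ball x r)).toReal = (volume (ball y r)).toReal := by
  rw [Measure.addHaar_ball_center volume x, Measure.addHaar_ball_center volume y]

lemma vol_two (d : ℕ) (x : E d) (r : ℝ) :
    (volume (ball x (2 * r))).toReal = 2 ^ d * (volume (ball x r)).toReal := by
  rw [Measure.addHaar_ball_mul_of_pos volume x (by norm_num : (0:ℝ) < 2) r, vol_center d x 0,
    ENNReal.toReal_mul, ENNReal.toReal_ofReal (by positivity)]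
  simp

lemma vol_mono (d : ℕ) (x : E d) {r s : ℝ} (h : r ≤ s) :
    (volume (ball x r)).toReal ≤ (volume (ball x s)).toReal :=
  ENNReal.toReal_mono measure_ball_lt_top.ne (measure_mono (ball_subset_ball h))

lemma LI.intOn {d : ℕ} {g : E d → ℝ} (hg : LocallyIntegrable g volume) (x : E d) (r : ℝ) :
    IntegrableOn g (ball x r) volume :=
  (hg.integrableOn_isCompact (isCompact_closedBall x r)).mono_set ball_subset_closedBall

lemma LI.abs {d : ℕ} {g : E d → ℝ} (hg : LocallyIntegrable g volume) :
    LocallyIntegrable (fun y => |g y|) volume := by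
  intro x
  obtain ⟨s, hs, h⟩ := hg x
  exact ⟨s, hs, h.abs⟩

lemma LI.subc {d : ℕ} {g : E d → ℝ} (hg : LocallyIntegrable g volume) (c : ℝ) :
    LocallyIntegrable (fun y => g y - c) volume :=
  hg.sub (locallyIntegrable_const c)

lemma ballAvg_mono {d : ℕ} {g h : E d → ℝ} (hg : LocallyIntegrable g volume)
    (hh : LocallyIntegrable h volume) (x : E d) (r : ℝ)
    (H : ∀ y ∈ ball x r, g y ≤ h y) : ballAvg d g x r ≤ ballAvg d h x r := by
  unfold ballAvg
  refine mul_le_mul_of_nonneg_left ?_ (by positivity)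
  exact setIntegral_mono_on (LI.intOn hg x r) (LI.intOn hh x r) measurableSet_ball H

lemma ballAvg_addc {d : ℕ} {g : E d → ℝ} (hg : LocallyIntegrable g volume) (c : ℝ)
    (x : E d) {r : ℝ} (hr : 0 < r) : ballAvg d (fun y => g y + c) x r = ballAvg d g x r + c := by
  unfold ballAvg
  rw [integral_add (LI.intOn hg x r) (LI.intOn (locallyIntegrable_const c) x r), mul_add]
  congr 1
  have := vol_pos d x hr
  simp only [integral_const, smul_eq_mul, Measure.real, Measure.restrict_apply_univ]
  field_simp

lemma ballAvg_nonneg {d : ℕ} {g : E d → ℝ} (x : E d) (r : ℝ) (H : ∀ y, 0 ≤ g y) :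
    0 ≤ ballAvg d g x r := by
  unfold ballAvg
  exact mul_nonneg (by positivity) (integral_nonneg H)

lemma abs_ballAvg_sub {d : ℕ} {g : E d → ℝ} (hg : LocallyIntegrable g volume) (c : ℝ)
    (x : E d) {r : ℝ} (hr : 0 < r) :
    |ballAvg d g x r - c| ≤ ballAvg d (fun y => |g y - c|) x r := by
  have h1 := ballAvg_addc hg (-c) x hr
  rw [sub_eq_add_neg, ← h1]
  unfold ballAvg
  rw [abs_mul, abs_of_nonneg (by positivity : (0:ℝ) ≤ (volume (ball x r)).toReal⁻¹)]
  gcongr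
  simpa [sub_eq_add_neg] using abs_integral_le_integral_abs (f := fun y => g y + -c)

lemma oscB_le {d : ℕ} {g : E d → ℝ} (hg : LocallyIntegrable g volume) (c : ℝ)
    (x : E d) {r : ℝ} (hr : 0 < r) :
    oscB d g x r ≤ 2 * ballAvg d (fun y => |g y - c|) x r := by
  have h1 := abs_ballAvg_sub hg c x hr
  have h2 : oscB d g x r ≤
      ballAvg d (fun y => |g y - c| + ballAvg d (fun y => |g y - c|) x r) x r := by
    unfold oscB
    refine ballAvg_mono (LI.abs (LI.subc hg _))
      ((LI.abs (LI.subc hg c)).add (locallyIntegrable_const _)) x r fun y _ => ?_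
    have := abs_sub_le (g y) c (ballAvg d g x r)
    rw [abs_sub_comm c] at this
    simp only [Pi.add_apply]
    linarith
  rw [ballAvg_addc (LI.abs (LI.subc hg c)) _ x hr] at h2
  linarith

lemma ballAvg_fubini {d : ℕ} {g : E d → ℝ} (hg : LocallyIntegrable g volume) (h0 : ∀ y, 0 ≤ g y)
    {t r M : ℝ} (ht : 0 < t) (htr : t ≤ r) (hM : 0 ≤ M) (H : ∀ z, ballAvg d g z t ≤ M)
    (x : E d) : ballAvg d g x r ≤ 2 ^ d * M := by
  have hr : 0 < r := ht.trans_le htr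
  set G : E d → ℝ≥0∞ := fun y => ENNReal.ofReal (g y) with hG
  have hGm : AEMeasurable G volume := hg.aestronglyMeasurable.aemeasurable.ennreal_ofReal
  have hconv : ∀ z s, ENNReal.ofReal (∫ y in ball z s, g y) = ∫⁻ y in ball z s, G y := fun z s =>
    ofReal_integral_eq_lintegral_ofReal (LI.intOn hg z s) (ae_of_all _ h0)
  have hz : ∀ z, ∫⁻ y in ball z t, G y ≤ volume (ball (0 : E d) t) * ENNReal.ofReal M := by
    intro z
    rw [← hconv, ← ENNReal.ofReal_toReal (measure_ball_lt_top (μ := volume) (x := (0:E d)) (r := t)).ne,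
      ← ENNReal.ofReal_mul (by positivity), vol_center d 0 z]
    apply ENNReal.ofReal_le_ofReal
    have := H z
    unfold ballAvg at this
    rwa [inv_mul_le_iff₀ (vol_pos d z ht)] at this
  have key : volume (ball (0 : E d) t) * ∫⁻ y in ball x r, G y ≤
      volume (ball (0 : E d) t) * (ENNReal.ofReal M * volume (ball x (2 * r))) := by
    calc volume (ball (0 : E d) t) * ∫⁻ y in ball x r, G y
        = ∫⁻ y in ball x r, ∫⁻ z in ball x (2 * r), (ball y t).indicator (fun _ => G y) z := by
          rw [← lintegral_const_mul'' _ hGm.restrict]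
          refine setLIntegral_congr_fun measurableSet_ball fun y hy => ?_
          rw [setLIntegral_indicator measurableSet_ball, setLIntegral_const, mul_comm,
            Set.inter_eq_left.2 _, Measure.addHaar_ball_center volume y]
          intro z hz
          simp only [mem_ball] at *
          linarith [dist_triangle z y x]
      _ ≤ ∫⁻ y, ∫⁻ z in ball x (2 * r), (ball y t).indicator (fun _ => G y) z :=
          setLIntegral_le_lintegral _ _
      _ = ∫⁻ z in ball x (2 * r), ∫⁻ y, (ball y t).indicator (fun _ => G y) z := by
          apply lintegral_lintegral_swap
          have : (Function.uncurry fun (y z : E d) => (ball y t).indicator (fun _ => G y) z) =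
              ({p : E d × E d | dist p.2 p.1 < t}).indicator (fun p => G p.1) := by
            ext ⟨y, z⟩
            simp [Set.indicator, mem_ball]
          rw [this]
          refine AEMeasurable.indicator ?_ ?_
          · exact hGm.comp_fst
          · exact measurableSet_lt (by fun_prop) (by fun_prop)
      _ = ∫⁻ z in ball x (2 * r), ∫⁻ y in ball z t, G y := by
          refine lintegral_congr fun z => ?_
          rw [← lintegral_indicator measurableSet_ball]
          refine lintegral_congr fun y => ?_
          simp [Set.indicator, mem_ball, dist_comm]
      _ ≤ ∫⁻ z in ball x (2 * r), volume (ball (0 : E d) t) * ENNReal.ofReal M :=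
          lintegral_mono hz
      _ = _ := by rw [setLIntegral_const, mul_assoc]
  rw [ENNReal.mul_le_mul_iff_right (measure_ball_pos _ _ ht).ne' measure_ball_lt_top.ne,
    ← hconv, ← ENNReal.ofReal_toReal (measure_ball_lt_top (μ := volume) (x := x) (r := 2 * r)).ne,
      ← ENNReal.ofReal_mul (by positivity), ENNReal.ofReal_le_ofReal_iff (by positivity),
      vol_two] at key
  unfold ballAvg
  rw [inv_mul_le_iff₀ (vol_pos d x hr)]
  linarith

/-- Mollified function. -/
lemma exists_mollif {d : ℕ} {f : E d → ℝ} (hf : LocallyIntegrable f volume) {t : ℝ} (ht : 0 < t) :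
    ∃ g : E d → ℝ, ContDiff ℝ (⊤ : ℕ∞) g ∧ ∀ (y : E d) (c : ℝ),
      |g y - c| ≤ 2 ^ d * ballAvg d (fun z => |f z - c|) y t := by
  let b : ContDiffBump (0 : E d) := ⟨t / 2, t, by positivity, by linarith⟩
  refine ⟨convolution (b.normed volume) f (ContinuousLinearMap.lsmul ℝ ℝ) volume,
    b.hasCompactSupport_normed.contDiff_convolution_left _ b.contDiff_normed hf, ?_⟩
  intro y c
  have hbd : ∀ z, b.normed volume z ≤ 2 ^ d * (volume (ball y t)).toReal⁻¹ := by
    intro z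
    have := b.normed_le_div_measure_closedBall_rOut volume 2 (by show t ≤ 2 * (t/2); linarith) z
    have e : (volume (ball y t)).toReal ≤ volume.real (closedBall (0 : E d) b.rOut) := by
      rw [vol_center d y 0]
      exact measureReal_mono ball_subset_closedBall measure_closedBall_lt_top.ne
    refine this.trans ?_
    rw [← div_eq_mul_inv, finrank_euclideanSpace_fin]
    have := vol_pos d y ht
    gcongr
  have hint : ∀ h : E d → ℝ, LocallyIntegrable h volume →
      Integrable (fun z => b.normed volume (y - z) * h z) volume := by
    intro h hh
    have hc : Continuous fun z => b.normed volume (y - z) :=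
      b.continuous_normed.comp (by fun_prop)
    have hs : HasCompactSupport fun z => b.normed volume (y - z) :=
      b.hasCompactSupport_normed.comp_homeomorph (Homeomorph.subLeft y)
    exact hh.integrable_smul_left_of_hasCompactSupport hc hs
  have e1 : convolution (b.normed volume) f (ContinuousLinearMap.lsmul ℝ ℝ) volume y - c =
      ∫ z, b.normed volume (y - z) * (f z - c) := by
    have hc : ∫ z, b.normed volume (y - z) * c = c := by
      rw [integral_sub_left_eq_self (fun z => b.normed volume z * c) volume y, integral_mul_const,
        b.integral_normed, one_mul]
    rw [convolution_eq_swap]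
    simp only [mul_sub]
    rw [integral_sub (hint f hf) (hint _ (locallyIntegrable_const c)), hc]
    simp
  rw [e1]
  refine (abs_integral_le_integral_abs).trans ?_
  have hfc := LI.abs (LI.subc hf c)
  calc ∫ z, |b.normed volume (y - z) * (f z - c)|
      ≤ ∫ z, (ball y t).indicator (fun z => 2 ^ d * (volume (ball y t)).toReal⁻¹ * |f z - c|) z := by
        refine integral_mono (hint _ (LI.subc hf c)).abs
          ((integrable_indicator_iff measurableSet_ball).2 ((LI.intOn hfc y t).const_mul _)) fun z => ?_
        simp only [abs_mul, abs_of_nonneg (b.nonneg_normed _)]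
        by_cases hz : z ∈ ball y t
        · rw [Set.indicator_of_mem hz]
          gcongr
          exact hbd _
        · rw [Set.indicator_of_notMem hz]
          have : b.normed volume (y - z) = 0 := by
            rw [← Function.notMem_support, b.support_normed_eq]
            rw [mem_ball, dist_comm, dist_eq_norm] at hz
            simpa [b] using hz
          simp [this]
    _ = _ := by
        rw [integral_indicator measurableSet_ball, integral_const_mul]
        unfold ballAvg
        ring

lemma ballAvg_compare {d : ℕ} {h : E d → ℝ} (hh : LocallyIntegrable h volume) (h0 : ∀ y, 0 ≤ h y)
    {s r : ℝ} (hs : 0 < s) (hr : 0 < r) {x y : E d} (hsub : ball y s ⊆ ball x r) :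
    ballAvg d h y s ≤
      (volume (ball (0 : E d) r)).toReal / (volume (ball (0 : E d) s)).toReal * ballAvg d h x r := by
  unfold ballAvg
  rw [vol_center d y 0, vol_center d x 0]
  have h1 := vol_pos d 0 hs
  have h2 := vol_pos d 0 hr
  have : ∫ z in ball y s, h z ≤ ∫ z in ball x r, h z :=
    setIntegral_mono_set (LI.intOn hh x r) (ae_of_all _ h0) hsub.eventuallyLE
  calc _ ≤ (volume (ball (0 : E d) s)).toReal⁻¹ * ∫ z in ball x r, h z := by gcongr
    _ = _ := by field_simp

lemma ballAvg_compare_two {d : ℕ} {h : E d → ℝ} (hh : LocallyIntegrable h volume)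
    (h0 : ∀ y, 0 ≤ h y) {t : ℝ} (ht : 0 < t) {x y : E d} (hxy : dist y x ≤ t) :
    ballAvg d h y t ≤ 2 ^ d * ballAvg d h x (2 * t) := by
  have := ballAvg_compare hh h0 ht (by positivity : 0 < 2 * t)
    (x := x) (y := y) (ball_subset_ball' (by linarith))
  rwa [vol_two, mul_div_assoc, div_self (vol_pos d 0 ht).ne', mul_one] at this

lemma core {d : ℕ} {f : E d → ℝ} (hf : LocallyIntegrable f volume) {δ : ℝ} (hδ : 0 < δ)
    (H1 : ∀ ε > 0, ∃ σ > 0, ∀ (x : E d) (r : ℝ), 0 < r → r < σ → oscB d f x r < ε)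
    (H2 : ∀ ε > 0, ∃ R > 0, ∀ (x : E d) (r : ℝ), δ ≤ r →
        ball x r ∩ ball (0 : E d) R = ∅ → ballAvg d (fun y => |f y|) x r < ε)
    {η : ℝ} (hη : 0 < η) :
    ∃ φ : E d → ℝ, ContDiff ℝ (⊤ : ℕ∞) φ ∧ HasCompactSupport φ ∧
      (∀ x r, 0 < r → oscB d (fun y => f y - φ y) x r ≤ 6 * (2 ^ d) ^ 3 * η) ∧
      (∀ x r, δ ≤ r → ballAvg d (fun y => |f y - φ y|) x r ≤ 3 * (2 ^ d) ^ 3 * η) := by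
  obtain ⟨σ, hσ, hosc⟩ := H1 η hη
  set t := min (σ / 3) δ with htdef
  have ht : 0 < t := by positivity
  have ht1 : 2 * t < σ := by
    have : t ≤ σ / 3 := min_le_left _ _
    linarith
  have ht2 : t ≤ δ := min_le_right _ _
  obtain ⟨g, hgs, hg⟩ := exists_mollif hf ht
  set D : ℝ := 2 ^ d with hD
  have hD1 : 1 ≤ D := one_le_pow₀ (by norm_num)
  have hgli : LocallyIntegrable g volume := hgs.continuous.locallyIntegrable
  -- P1
  have P1 : ∀ x, ∀ y ∈ ball x t, |g y - ballAvg d f x (2 * t)| ≤ D ^ 2 * η := by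
    intro x y hy
    refine (hg y _).trans ?_
    have h1 := ballAvg_compare_two (LI.abs (LI.subc hf (ballAvg d f x (2 * t)))) (fun _ => abs_nonneg _)
      ht (mem_ball.1 hy).le
    have h2 := hosc x (2 * t) (by positivity) ht1
    unfold oscB at h2
    calc _ ≤ D * (D * η) := by
          have hD0 : 0 ≤ D := by positivity
          exact mul_le_mul_of_nonneg_left (h1.trans (mul_le_mul_of_nonneg_left h2.le hD0)) hD0
      _ = _ := by ring
  -- P2
  have hfg : LocallyIntegrable (fun y => |f y - g y|) volume := LI.abs (hf.sub hgli)
  have P2 : ∀ x, ballAvg d (fun y => |f y - g y|) x t ≤ 2 * D ^ 2 * η := by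
    intro x
    set c := ballAvg d f x (2 * t) with hc
    have hfc := LI.abs (LI.subc hf c)
    have h1 := ballAvg_compare_two hfc (fun _ => abs_nonneg _) ht (dist_self x ▸ ht.le)
    have h2 := hosc x (2 * t) (by positivity) ht1
    unfold oscB at h2
    have h3 : ballAvg d (fun y => |f y - g y|) x t ≤
        ballAvg d (fun y => |f y - c| + D ^ 2 * η) x t := by
      refine ballAvg_mono hfg (hfc.add (locallyIntegrable_const _)) x t fun y hy => ?_
      have := abs_sub_le (f y) c (g y)
      rw [abs_sub_comm c] at this
      have := P1 x y hy
      simp only [Pi.add_apply]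
      linarith
    rw [ballAvg_addc hfc _ x ht] at h3
    have h4 : D * ballAvg d (fun y => |f y - c|) x (2 * t) ≤ D * η :=
      mul_le_mul_of_nonneg_left h2.le (by positivity)
    have h5 : D * η ≤ D ^ 2 * η := by
      have : D ≤ D ^ 2 := by nlinarith
      gcongr
    linarith
  have P3 : ∀ x r, t ≤ r → ballAvg d (fun y => |f y - g y|) x r ≤ 2 * D ^ 3 * η := by
    intro x r hr
    refine (ballAvg_fubini hfg (fun _ => abs_nonneg _) ht hr (by positivity) P2 x).trans_eq ?_
    rw [← hD]
    ring
  -- P4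
  set ρ : ℝ := (volume (ball (0 : E d) δ)).toReal / (volume (ball (0 : E d) t)).toReal with hρ
  have hρ0 : 0 < ρ := div_pos (vol_pos d 0 hδ) (vol_pos d 0 ht)
  obtain ⟨R, hR, hfar⟩ := H2 (η / (D * ρ)) (by positivity)
  have P4 : ∀ y : E d, R + δ ≤ ‖y‖ → |g y| ≤ η := by
    intro y hy
    have h1 := hg y 0
    simp only [sub_zero] at h1
    have h2 := ballAvg_compare (LI.abs hf) (fun _ => abs_nonneg _) ht hδ (x := y) (y := y)
      (ball_subset_ball ht2)
    have h3 := hfar y δ le_rfl (by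
      rw [← Set.disjoint_iff_inter_eq_empty]
      apply ball_disjoint_ball
      rw [dist_zero_right]
      linarith)
    calc |g y| ≤ D * (ρ * (η / (D * ρ))) := by
          refine h1.trans (mul_le_mul_of_nonneg_left (h2.trans ?_) (by positivity))
          exact mul_le_mul_of_nonneg_left h3.le hρ0.le
      _ = η := by field_simp
  let χ : ContDiffBump (0 : E d) := ⟨R + δ, R + δ + 1, by positivity, by linarith⟩
  set φ : E d → ℝ := fun y => χ y * g y with hφ
  have hφs : ContDiff ℝ (⊤ : ℕ∞) φ := χ.contDiff.mul hgs
  have hφc : HasCompactSupport φ := χ.hasCompactSupport.mul_right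
  have hφli : LocallyIntegrable φ volume := hφs.continuous.locallyIntegrable
  have P5 : ∀ y, |g y - φ y| ≤ η := by
    intro y
    by_cases hy : y ∈ closedBall (0 : E d) (R + δ)
    · have : χ y = 1 := χ.one_of_mem_closedBall hy
      simp [hφ, this, hη.le]
    · have h1 : R + δ ≤ ‖y‖ := by
        rw [mem_closedBall, dist_zero_right, not_le] at hy
        exact hy.le
      have h2 := P4 y h1
      have : g y - φ y = (1 - χ y) * g y := by simp only [hφ]; ring
      rw [this, abs_mul]
      have h3 : |1 - χ y| ≤ 1 := by
        rw [abs_le]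
        constructor <;> linarith [χ.nonneg (x := y), χ.le_one (x := y)]
      calc _ ≤ 1 * η := by gcongr
        _ = η := one_mul _
  have hfφ : LocallyIntegrable (fun y => f y - φ y) volume := hf.sub hφli
  have hD3 : η ≤ D ^ 3 * η := le_mul_of_one_le_left hη.le (one_le_pow₀ hD1)
  have hD23 : D ^ 2 * η ≤ D ^ 3 * η := by
    gcongr
    norm_num
  have P6 : ∀ x r, t ≤ r → ballAvg d (fun y => |f y - φ y|) x r ≤ 3 * D ^ 3 * η := by
    intro x r hr
    have h3 : ballAvg d (fun y => |f y - φ y|) x r ≤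
        ballAvg d (fun y => |f y - g y| + η) x r := by
      refine ballAvg_mono (LI.abs hfφ) (hfg.add (locallyIntegrable_const _)) x r fun y hy => ?_
      have := abs_sub_le (f y) (g y) (φ y)
      have := P5 y
      simp only [Pi.add_apply]
      linarith
    rw [ballAvg_addc hfg _ x (ht.trans_le hr)] at h3
    have := P3 x r hr
    linarith
  refine ⟨φ, hφs, hφc, fun x r hr => ?_, fun x r hr => P6 x r (ht2.trans hr)⟩
  rcases le_or_gt t r with htr | htr
  · have h1 := oscB_le hfφ 0 x hr
    simp only [sub_zero] at h1
    have := P6 x r htr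
    linarith
  · set a := ballAvg d f x r with ha
    set c := ballAvg d f x (2 * t) with hc
    have h1 := oscB_le hfφ (a - c) x hr
    have hfa := LI.abs (LI.subc hf a)
    have h3 : ballAvg d (fun y => |f y - φ y - (a - c)|) x r ≤
        ballAvg d (fun y => |f y - a| + (D ^ 2 * η + η)) x r := by
      refine ballAvg_mono (LI.abs (LI.subc hfφ _)) (hfa.add (locallyIntegrable_const _)) x r
        fun y hy => ?_
      have e1 := P5 y
      have e2 := P1 x y (ball_subset_ball htr.le hy)
      simp only [Pi.add_apply]
      have e3 : f y - φ y - (a - c) = (f y - a) + ((g y - φ y) - (g y - c)) := by ring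
      rw [e3]
      have e4 := abs_add_le (f y - a) ((g y - φ y) - (g y - c))
      have e5 := abs_sub (g y - φ y) (g y - c)
      linarith
    rw [ballAvg_addc hfa _ x hr] at h3
    have h4 := hosc x r hr (by linarith)
    unfold oscB at h4
    linarith

/-- A locally integrable `f` with `‖f‖_{bmo_n} < ∞` belongs to `vmo_n` if and only if
it can be approximated in the `bmo_n` norm by functions in `C_c^∞`. -/
theorem stmt15 (d : ℕ) (hd : 3 ≤ d) (n : ℤ) (f : E d → ℝ)
    (hf : LocallyIntegrable f volume) (hfin : bmonNorm d n f < ⊤) :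
    ((∀ ε > 0, ∃ σ > 0, ∀ (x : E d) (r : ℝ), 0 < r → r < σ → oscB d f x r < ε) ∧
      (∀ ε > 0, ∃ R > 0, ∀ (x : E d) (r : ℝ), (2:ℝ) ^ (-(n:ℝ)/2) ≤ r →
        ball x r ∩ ball (0 : E d) R = ∅ → ballAvg d (fun y => |f y|) x r < ε)) ↔
    (∀ ε > 0, ∃ φ : E d → ℝ, ContDiff ℝ (⊤ : ℕ∞) φ ∧ HasCompactSupport φ ∧
      bmonNorm d n (fun y => f y - φ y) < ENNReal.ofReal ε) := by
  have hδ : (0:ℝ) < (2:ℝ) ^ (-(n:ℝ)/2) := by positivity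
  constructor
  · rintro ⟨H1, H2⟩ ε hε
    set D : ℝ := (2 ^ d) ^ 3 with hD
    have hD0 : 0 < D := by positivity
    obtain ⟨φ, hs, hc, h1, h2⟩ := core hf hδ H1 H2 (η := ε / (10 * D)) (by positivity)
    refine ⟨φ, hs, hc, ?_⟩
    have e1 : bmoNormE d (fun y => f y - φ y) ≤ ENNReal.ofReal (6 * ε / 10) := by
      refine iSup_le fun x => iSup_le fun r => iSup_le fun hr => ENNReal.ofReal_le_ofReal ?_
      refine (h1 x r hr).trans_eq ?_
      rw [← hD]
      field_simp
    have e2 : (⨆ (x : E d) (r : ℝ) (_ : (2:ℝ) ^ (-(n:ℝ)/2) ≤ r),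
        ENNReal.ofReal (ballAvg d (fun y => |f y - φ y|) x r)) ≤ ENNReal.ofReal (3 * ε / 10) := by
      refine iSup_le fun x => iSup_le fun r => iSup_le fun hr => ENNReal.ofReal_le_ofReal ?_
      refine (h2 x r hr).trans_eq ?_
      rw [← hD]
      field_simp
    unfold bmonNorm
    refine (add_le_add e1 e2).trans_lt ?_
    rw [← ENNReal.ofReal_add (by positivity) (by positivity), ENNReal.ofReal_lt_ofReal_iff hε]
    linarith
  · intro H
    constructor
    · intro ε hε
      obtain ⟨φ, hs, hc, hn⟩ := H (ε / 4) (by positivity)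
      have huc := hc.uniformContinuous_of_continuous hs.continuous
      obtain ⟨σ, hσ, hφ⟩ := Metric.uniformContinuous_iff.1 huc (ε / 4) (by positivity)
      refine ⟨σ, hσ, fun x r hr hrσ => ?_⟩
      have hli : LocallyIntegrable (fun y => f y - φ y) volume :=
        hf.sub hs.continuous.locallyIntegrable
      have h0 : ENNReal.ofReal (oscB d (fun y => f y - φ y) x r) < ENNReal.ofReal (ε / 4) :=
        lt_of_le_of_lt (le_trans (le_iSup_of_le x (le_iSup_of_le r
          (le_iSup (fun _ : 0 < r => ENNReal.ofReal (oscB d (fun y => f y - φ y) x r)) hr)))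
          le_self_add) hn
      rw [ENNReal.ofReal_lt_ofReal_iff (by positivity)] at h0
      unfold oscB at h0
      set a := ballAvg d (fun y => f y - φ y) x r with ha
      have h1 := oscB_le hf (a + φ x) x hr
      have hla := LI.abs (LI.subc hli a)
      have h3 : ballAvg d (fun y => |f y - (a + φ x)|) x r ≤
          ballAvg d (fun y => |f y - φ y - a| + ε / 4) x r := by
        refine ballAvg_mono (LI.abs (LI.subc hf _)) (hla.add (locallyIntegrable_const _)) x r
          fun y hy => ?_
        have e1 := hφ ((mem_ball.1 hy).trans hrσ)
        rw [Real.dist_eq] at e1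
        simp only [Pi.add_apply]
        have e3 : f y - (a + φ x) = (f y - φ y - a) + (φ y - φ x) := by ring
        rw [e3]
        have e4 := abs_add_le (f y - φ y - a) (φ y - φ x)
        linarith
      rw [ballAvg_addc hla _ x hr] at h3
      linarith
    · intro ε hε
      obtain ⟨φ, hs, hc, hn⟩ := H ε hε
      obtain ⟨R, hR, hsub⟩ := hc.isCompact.isBounded.subset_ball_lt 0 (0 : E d)
      refine ⟨R, hR, fun x r hr hdis => ?_⟩
      have h0 : ENNReal.ofReal (ballAvg d (fun y => |f y - φ y|) x r) < ENNReal.ofReal ε :=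
        lt_of_le_of_lt (le_trans (le_iSup_of_le x (le_iSup_of_le r
          (le_iSup (fun _ : (2:ℝ) ^ (-(n:ℝ)/2) ≤ r =>
            ENNReal.ofReal (ballAvg d (fun y => |f y - φ y|) x r)) hr)))
          le_add_self) hn
      rw [ENNReal.ofReal_lt_ofReal_iff hε] at h0
      refine lt_of_le_of_lt ?_ h0
      refine ballAvg_mono (LI.abs hf) (LI.abs (hf.sub hs.continuous.locallyIntegrable)) x r
        fun y hy => ?_
      have : φ y = 0 := by
        by_contra hne
        have hy2 : y ∈ ball (0 : E d) R := hsub (subset_tsupport _ hne)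
        have : y ∈ ball x r ∩ ball (0 : E d) R := ⟨hy, hy2⟩
        rw [hdis] at this
        exact this
      simp [this]
end
end

section
/- Let n ∈ ℤ and let {f_j}_{j≥1} be a sequence in h^1_n(ℝ^d) with sup_j ‖f_j‖_{h^1_n} < ∞, and suppose f_j(x) → f(x) for almost every x ∈ ℝ^d. Then f ∈ h^1_n(ℝ^d), ‖f‖_{h^1_n} ≤ liminf_{j→∞} ‖f_j‖_{h^1_n}, and for every φ ∈ C_c^∞(ℝ^d), lim_{j→∞} ∫_{ℝ^d} f_j φ = ∫_{ℝ^d} f φ. -/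
open MeasureTheory Metric Real Filter Topology NNReal ENNReal

noncomputable section

section
def gk (d : ℕ) (s : ℝ) (v : E d) : ℝ := (4 * π * s) ^ (-(d:ℝ)/2) * Real.exp (-(‖v‖^2) / (4 * s))

def heat (d : ℕ) (s : ℝ) (f : E d → ℝ) (x : E d) : ℝ := ∫ z, gk d s (x - z) * f z

variable {d : ℕ}

lemma gk_nonneg {s : ℝ} (hs : 0 < s) (v : E d) : 0 ≤ gk d s v := by
  unfold gk; positivity

lemma gk_le {s : ℝ} (hs : 0 < s) (v : E d) : gk d s v ≤ (4 * π * s) ^ (-(d:ℝ)/2) := by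
  unfold gk
  have h1 : Real.exp (-(‖v‖^2) / (4 * s)) ≤ 1 := by
    rw [Real.exp_le_one_iff]
    apply div_nonpos_of_nonpos_of_nonneg
    · have := sq_nonneg ‖v‖; linarith
    · positivity
  have h2 : 0 ≤ (4 * π * s) ^ (-(d:ℝ)/2) := by positivity
  nlinarith

lemma gk_symm (s : ℝ) (x y : E d) : gk d s (x - y) = gk d s (y - x) := by
  unfold gk; rw [norm_sub_rev]

lemma gk_continuous (s : ℝ) : Continuous (gk d s) := by
  unfold gk; fun_prop

lemma gk_integral {s : ℝ} (hs : 0 < s) : ∫ v, gk d s v = 1 := by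
  unfold gk
  rw [integral_const_mul]
  have := GaussianFourier.integral_rexp_neg_mul_sq_norm (V := E d) (b := 1 / (4 * s)) (by positivity)
  have e : (fun v : E d => Real.exp (-(‖v‖^2) / (4 * s))) =
      fun v : E d => Real.exp (-(1 / (4 * s)) * ‖v‖^2) := by
    funext v; congr 1; ring
  rw [e, this]
  have : π / (1 / (4 * s)) = 4 * π * s := by field_simp
  rw [this, finrank_euclideanSpace_fin, ← Real.rpow_add (by positivity)]
  have : -(d:ℝ)/2 + (d:ℝ)/2 = 0 := by ring
  rw [this, Real.rpow_zero]

lemma gk_integrable {s : ℝ} (hs : 0 < s) : Integrable (gk d s) := by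
  by_contra h
  have := gk_integral (d := d) hs
  rw [integral_undef h] at this
  norm_num at this

lemma gk_mul_gk {a b : ℝ} (ha : 0 < a) (hb : 0 < b) (x y z : E d) :
    gk d a (x - z) * gk d b (z - y) = gk d (a + b) (x - y) *
      gk d (a * b / (a + b)) (z - ((b / (a + b)) • x + (a / (a + b)) • y)) := by
  have hab : 0 < a + b := by positivity
  set v := z - ((b / (a + b)) • x + (a / (a + b)) • y) with hv
  set w := x - y with hw
  have h1 : x - z = (a / (a + b)) • w - v := by
    have : x = (a / (a + b)) • x + (b / (a + b)) • x := by
      rw [← add_smul, ← add_div, div_self hab.ne', one_smul]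
    rw [hv, hw, smul_sub]
    nth_rewrite 1 [this]
    abel
  have h2 : z - y = (b / (a + b)) • w + v := by
    have : y = (a / (a + b)) • y + (b / (a + b)) • y := by
      rw [← add_smul, ← add_div, div_self hab.ne', one_smul]
    rw [hv, hw, smul_sub]
    nth_rewrite 1 [this]
    abel
  rw [h1, h2]
  unfold gk
  have n1 : ‖(a / (a + b)) • w - v‖^2 = (a/(a+b))^2 * ‖w‖^2 - 2 * (a/(a+b)) * inner ℝ w v + ‖v‖^2 := by
    rw [norm_sub_sq_real, norm_smul, inner_smul_left, mul_pow, Real.norm_eq_abs, sq_abs]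
    simp only [conj_trivial]; ring
  have n2 : ‖(b / (a + b)) • w + v‖^2 = (b/(a+b))^2 * ‖w‖^2 + 2 * (b/(a+b)) * inner ℝ w v + ‖v‖^2 := by
    rw [norm_add_sq_real, norm_smul, inner_smul_left, mul_pow, Real.norm_eq_abs, sq_abs]
    simp only [conj_trivial]; ring
  rw [n1, n2]
  have c : (4 * π * a) ^ (-(d:ℝ)/2) * (4 * π * b) ^ (-(d:ℝ)/2) =
      (4 * π * (a + b)) ^ (-(d:ℝ)/2) * (4 * π * (a * b / (a + b))) ^ (-(d:ℝ)/2) := by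
    rw [← Real.mul_rpow (by positivity) (by positivity), ← Real.mul_rpow (by positivity) (by positivity)]
    congr 1; field_simp
  rw [mul_mul_mul_comm, c]
  conv_rhs => rw [mul_mul_mul_comm]
  congr 1
  rw [← Real.exp_add, ← Real.exp_add]
  congr 1
  field_simp
  ring

lemma gk_semigroup {a b : ℝ} (ha : 0 < a) (hb : 0 < b) (x y : E d) :
    ∫ z, gk d a (x - z) * gk d b (z - y) = gk d (a + b) (x - y) := by
  simp_rw [gk_mul_gk ha hb]
  rw [integral_const_mul, integral_sub_right_eq_self (fun v => gk d (a * b / (a + b)) v),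
    gk_integral (by positivity), mul_one]

lemma gk_poly (d p : ℕ) : ∃ C : ℝ, 0 < C ∧ ∀ (s ρ : ℝ) (v : E d), 0 < s → 0 < ρ → s ≤ 4 * ρ^2 →
    (2 + ‖v‖ / ρ) ^ p * gk d s v ≤ C * gk d (2 * s) v := by
  refine ⟨(2:ℝ)^p * (p.factorial * Real.exp 3) * 2 ^ ((d:ℝ)/2), by positivity, ?_⟩
  intro s ρ v hs hρ hsρ
  set τ := ‖v‖ / √s with hτ
  have hss : 0 < √s := Real.sqrt_pos.2 hs
  have hτ0 : 0 ≤ τ := by positivity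
  have h1 : ‖v‖ / ρ ≤ 2 * τ := by
    have : √s ≤ 2 * ρ := by
      rw [Real.sqrt_le_left (by positivity)]; nlinarith
    rw [hτ, div_le_iff₀ hρ]
    have : ‖v‖ = ‖v‖ / √s * √s := by field_simp
    have h0 : 0 ≤ ‖v‖ / √s := by positivity
    nlinarith
  have h2 : (2 + ‖v‖ / ρ) ^ p ≤ 2^p * (1 + τ)^p := by
    rw [← mul_pow]
    apply pow_le_pow_left₀ (by positivity)
    linarith
  have h3 : (1 + τ)^p ≤ p.factorial * Real.exp (1 + τ) := by
    have := Real.pow_div_factorial_le_exp (1 + τ) (by positivity) p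
    rw [div_le_iff₀ (by positivity)] at this
    linarith
  have hv : ‖v‖^2 = τ^2 * s := by
    rw [hτ, div_pow, Real.sq_sqrt hs.le]; field_simp
  have h4 : Real.exp (1 + τ) * Real.exp (-(‖v‖^2) / (4 * s)) ≤ Real.exp 3 * Real.exp (-(‖v‖^2) / (4 * (2 * s))) := by
    rw [← Real.exp_add, ← Real.exp_add, Real.exp_le_exp, hv]
    have e1 : -(τ^2 * s) / (4 * s) = -τ^2/4 := by field_simp
    have e2 : -(τ^2 * s) / (4 * (2 * s)) = -τ^2/8 := by field_simp; ring
    rw [e1, e2]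
    nlinarith [sq_nonneg (τ - 4)]
  unfold gk
  have c : (4 * π * s) ^ (-(d:ℝ)/2) = 2 ^ ((d:ℝ)/2) * (4 * π * (2 * s)) ^ (-(d:ℝ)/2) := by
    have : 4 * π * (2 * s) = 2 * (4 * π * s) := by ring
    rw [this, Real.mul_rpow (x := 2) (y := 4 * π * s) (by positivity) (by positivity), ← mul_assoc, ← Real.rpow_add (by positivity)]
    have : (d:ℝ)/2 + -(d:ℝ)/2 = 0 := by ring
    rw [this]; simp
  rw [c]
  set A := (4 * π * (2 * s)) ^ (-(d:ℝ)/2)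
  have hA : 0 ≤ A := by positivity
  calc (2 + ‖v‖ / ρ) ^ p * (2 ^ ((d:ℝ)/2) * A * Real.exp (-(‖v‖^2) / (4 * s)))
      ≤ (2^p * (p.factorial * Real.exp (1 + τ))) * (2 ^ ((d:ℝ)/2) * A * Real.exp (-(‖v‖^2) / (4 * s))) := by
        gcongr
        exact h2.trans (by gcongr)
    _ = 2^p * p.factorial * 2 ^ ((d:ℝ)/2) * A * (Real.exp (1 + τ) * Real.exp (-(‖v‖^2) / (4 * s))) := by ring
    _ ≤ 2^p * p.factorial * 2 ^ ((d:ℝ)/2) * A * (Real.exp 3 * Real.exp (-(‖v‖^2) / (4 * (2 * s)))) := by gcongr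
    _ = _ := by ring

lemma gk_shift_integrable {s : ℝ} (hs : 0 < s) (x : E d) : Integrable (fun z => gk d s (x - z)) := by
  exact (gk_integrable hs).comp_sub_left x

lemma gk_shift_integral {s : ℝ} (hs : 0 < s) (x : E d) : ∫ z, gk d s (x - z) = 1 := by
  rw [integral_sub_left_eq_self (gk d s) volume x, gk_integral hs]

lemma heat_int {s : ℝ} (hs : 0 < s) {f : E d → ℝ} (hf : Integrable f) (x : E d) :
    Integrable (fun z => gk d s (x - z) * f z) := by
  refine hf.bdd_mul (c := (4 * π * s) ^ (-(d:ℝ)/2)) ?_ ?_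
  · exact ((gk_continuous s).comp (by fun_prop)).aestronglyMeasurable
  · refine Eventually.of_forall fun z => ?_
    rw [Real.norm_of_nonneg (gk_nonneg hs _)]; exact gk_le hs _

lemma heat_continuous {s : ℝ} (hs : 0 < s) {f : E d → ℝ} (hf : Integrable f) :
    Continuous (heat d s f) := by
  unfold heat
  refine continuous_of_dominated (bound := fun z => (4 * π * s) ^ (-(d:ℝ)/2) * ‖f z‖) ?_ ?_ ?_ ?_
  · intro x; exact (heat_int hs hf x).aestronglyMeasurable
  · intro x; refine Eventually.of_forall fun z => ?_
    rw [norm_mul, Real.norm_of_nonneg (gk_nonneg hs _)]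
    gcongr; exact gk_le hs _
  · exact hf.norm.const_mul _
  · refine Eventually.of_forall fun z => ?_
    have := gk_continuous (d := d) s
    fun_prop

lemma heat_abs_le {s : ℝ} (hs : 0 < s) {f : E d → ℝ} (hf : Integrable f) (x : E d) :
    |heat d s f x| ≤ (4 * π * s) ^ (-(d:ℝ)/2) * ∫ z, |f z| := by
  rw [← integral_const_mul]
  unfold heat
  refine (abs_integral_le_integral_abs).trans ?_
  refine integral_mono (heat_int hs hf x).abs (hf.abs.const_mul _) fun z => ?_
  simp only [abs_mul, abs_of_nonneg (gk_nonneg hs _)]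
  gcongr; exact gk_le hs _

lemma heat_prod_int {s : ℝ} (hs : 0 < s) {f : E d → ℝ} (hf : Integrable f) :
    Integrable (fun p : E d × E d => gk d s (p.1 - p.2) * f p.2) (volume.prod volume) := by
  have := Integrable.convolution_integrand (ContinuousLinearMap.mul ℝ ℝ) hf (gk_integrable (d := d) hs)
  refine this.congr (Eventually.of_forall fun p => ?_)
  simp [mul_comm]

lemma heat_integrable {s : ℝ} (hs : 0 < s) {f : E d → ℝ} (hf : Integrable f) :
    Integrable (heat d s f) := (heat_prod_int hs hf).integral_prod_left

lemma heat_symm {s : ℝ} (hs : 0 < s) {f p : E d → ℝ} (hf : Integrable f)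
    (hp : AEStronglyMeasurable p) (B : ℝ) (hB : ∀ x, |p x| ≤ B) :
    ∫ x, p x * heat d s f x = ∫ z, heat d s p z * f z := by
  have h1 : Integrable (fun q : E d × E d => p q.1 * (gk d s (q.1 - q.2) * f q.2)) (volume.prod volume) := by
    refine (heat_prod_int hs hf).bdd_mul (c := B) hp.comp_fst ?_
    exact Eventually.of_forall fun q => hB _
  have h2 := integral_integral_swap (f := fun x z => p x * (gk d s (x - z) * f z)) h1
  unfold heat
  simp_rw [← integral_const_mul]
  rw [h2]
  congr 1; funext z
  rw [← integral_mul_const]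
  congr 1; funext x
  rw [gk_symm]; ring

lemma heat_one {s : ℝ} (hs : 0 < s) (x : E d) : heat d s (fun _ => 1) x = 1 := by
  simp [heat, gk_shift_integral hs]

lemma heat_integral {s : ℝ} (hs : 0 < s) {f : E d → ℝ} (hf : Integrable f) :
    ∫ x, heat d s f x = ∫ x, f x := by
  have := heat_symm hs hf (p := fun _ => 1) aestronglyMeasurable_const 1 (by simp)
  simpa [heat_one hs] using this

lemma heat_gk {a b : ℝ} (ha : 0 < a) (hb : 0 < b) (y z : E d) :
    heat d b (fun w => gk d a (y - w)) z = gk d (a + b) (y - z) := by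
  unfold heat
  have := gk_semigroup (d := d) hb ha z y
  simp_rw [gk_symm a y]
  rw [this, gk_symm, add_comm]

lemma heat_heat {a b : ℝ} (ha : 0 < a) (hb : 0 < b) {f : E d → ℝ} (hf : Integrable f) (x : E d) :
    heat d a (heat d b f) x = heat d (a + b) f x := by
  have := heat_symm hb hf (p := fun w => gk d a (x - w))
    ((gk_continuous a).comp (by fun_prop)).aestronglyMeasurable ((4 * π * a) ^ (-(d:ℝ)/2)) (by
      intro w; rw [abs_of_nonneg (gk_nonneg ha _)]; exact gk_le ha _)
  simp_rw [heat_gk ha hb] at this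
  exact this

lemma heat_mono {s : ℝ} (hs : 0 < s) {f g : E d → ℝ} (hf : Integrable f) (hg : Integrable g)
    (h : ∀ z, f z ≤ g z) (x : E d) : heat d s f x ≤ heat d s g x := by
  unfold heat
  refine integral_mono (heat_int hs hf x) (heat_int hs hg x) fun z => ?_
  exact mul_le_mul_of_nonneg_left (h z) (gk_nonneg hs _)

lemma heat_nonneg {s : ℝ} (hs : 0 < s) {f : E d → ℝ} (h : ∀ z, 0 ≤ f z) (x : E d) :
    0 ≤ heat d s f x :=
  integral_nonneg fun z => mul_nonneg (gk_nonneg hs _) (h z)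

lemma gaussP_eq (d : ℕ) {t : ℝ} (ht : 0 < t) (v : E d) :
    t ^ (-(d:ℝ)) * gaussP d (t⁻¹ • v) = gk d (t^2) v := by
  unfold gaussP gk
  have h1 : (4 * π * t^2) ^ (-(d:ℝ)/2) = (4 * π) ^ (-(d:ℝ)/2) * t ^ (-(d:ℝ)) := by
    rw [Real.mul_rpow (by positivity) (by positivity), ← Real.rpow_natCast t 2, ← Real.rpow_mul ht.le]
    congr 2; push_cast; ring
  have h2 : -(‖t⁻¹ • v‖^2)/4 = -(‖v‖^2) / (4 * t^2) := by
    rw [norm_smul, mul_pow, norm_inv, Real.norm_of_nonneg ht.le]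
    field_simp
  rw [h1, h2]; ring

lemma dyadic_down (D : ℝ) (hD : 0 < D) (K : ℕ) : ∀ r : ℝ, 0 < r →
    ∑ k ∈ Finset.range K, (if r / 2^k < D then r / 2^k else 0) ≤ 2 * D := by
  induction K with
  | zero => intro r hr; simp; linarith
  | succ K ih =>
    intro r hr
    by_cases h : r < D
    · calc ∑ k ∈ Finset.range (K+1), (if r / 2^k < D then r / 2^k else 0)
          ≤ ∑ k ∈ Finset.range (K+1), r * (1/2)^k := by
            apply Finset.sum_le_sum
            intro k _
            have e : r / 2^k = r * (1/2)^k := by rw [one_div, inv_pow]; rfl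
            rw [e]
            split_ifs
            · exact le_rfl
            · positivity
        _ = r * ∑ k ∈ Finset.range (K+1), (1/2:ℝ)^k := by rw [Finset.mul_sum]
        _ ≤ r * 2 := by
            gcongr
            exact sum_geometric_two_le _
        _ ≤ 2 * D := by linarith
    · rw [Finset.sum_range_succ']
      simp only [pow_zero, div_one, h, if_false, add_zero]
      have := ih (r/2) (by positivity)
      refine le_trans (le_of_eq ?_) this
      apply Finset.sum_congr rfl
      intro k _
      have : r / 2^(k+1) = r/2/2^k := by rw [pow_succ]; field_simp
      rw [this]

lemma dyadic_up (γ c : ℝ) (hγ : 0 ≤ γ) (hc : 0 < c) (N : ℕ) :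
    ∑ i ∈ Finset.range N, (if c * 2^i < γ then c * 2^i else 0) ≤ 2 * γ := by
  induction N with
  | zero => simp; linarith
  | succ N ih =>
    by_cases h : c * 2^N < γ
    · calc ∑ i ∈ Finset.range (N+1), (if c * 2^i < γ then c * 2^i else 0)
          ≤ ∑ i ∈ Finset.range (N+1), c * 2^i := by
            apply Finset.sum_le_sum
            intro k _
            split_ifs
            · exact le_rfl
            · positivity
        _ = c * ∑ i ∈ Finset.range (N+1), 2^i := by rw [Finset.mul_sum]
        _ = c * (2^(N+1) - 1) := by
            rw [geom_sum_eq (by norm_num)]; norm_num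
        _ ≤ 2 * γ := by rw [pow_succ]; linarith
    · rw [Finset.sum_range_succ, if_neg h, add_zero]; exact ih

lemma dyadic_up_enn (g : ℝ≥0∞) (c : ℝ) (hc : 0 < c) (N : ℕ) :
    ∑ i ∈ Finset.range N, (if ENNReal.ofReal (c * 2^i) < g then ENNReal.ofReal (c * 2^i) else 0) ≤ 2 * g := by
  by_cases hg : g = ⊤
  · simp [hg]
  obtain ⟨γ, rfl⟩ : ∃ γ : ℝ≥0, g = γ := ⟨g.toNNReal, (ENNReal.coe_toNNReal hg).symm⟩
  have h := dyadic_up (γ:ℝ) c γ.2 hc N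
  have h2 := ENNReal.ofReal_le_ofReal h
  rw [ENNReal.ofReal_mul (by norm_num), ENNReal.ofReal_coe_nnreal,
    ENNReal.ofReal_sum_of_nonneg (by intro i _; split_ifs <;> positivity)] at h2
  refine le_trans (le_of_eq ?_) (h2.trans (by simp))
  apply Finset.sum_congr rfl
  intro i _
  have : ENNReal.ofReal (c * 2^i) < (γ:ℝ≥0∞) ↔ c * 2^i < (γ:ℝ) := by
    rw [← ENNReal.ofReal_coe_nnreal, ENNReal.ofReal_lt_ofReal_iff_of_nonneg (by positivity)]
  simp only [this]
  split_ifs <;> simp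

lemma ball_sum (x : E d) (g : E d → ℝ≥0∞) (hg : Measurable g) (V : ℝ) (hV : 0 ≤ V)
    (h : ∀ ρ : ℝ, 0 < ρ → ∫⁻ w in ball x ρ, g w ≤ ENNReal.ofReal (V * ρ^d)) (ρ : ℝ) (hρ : 0 < ρ) :
    ∫⁻ w, ENNReal.ofReal (((1 + ‖x - w‖ / ρ)^(d+1))⁻¹) * g w ≤ ENNReal.ofReal (2^(d+2) * V * ρ^d) := by
  have key : ∀ w, ENNReal.ofReal (((1 + ‖x - w‖ / ρ)^(d+1))⁻¹) * g w ≤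
      ∑' i : ℕ, ENNReal.ofReal (2^(d+1) * ((2:ℝ)^(d+1))⁻¹^i) * (ball x (2^i * ρ)).indicator g w := by
    intro w
    set τ := ‖x - w‖ / ρ with hτ
    have hτ0 : 0 ≤ τ := by positivity
    obtain ⟨n, hn1, hn2⟩ := exists_nat_pow_near (x := 1 + τ) (y := (2:ℝ)) (by linarith) (by norm_num)
    refine le_trans ?_ (ENNReal.le_tsum (n+1))
    have hw : w ∈ ball x (2^(n+1) * ρ) := by
      rw [mem_ball, dist_comm, dist_eq_norm]
      have : ‖x - w‖ = τ * ρ := by rw [hτ]; field_simp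
      rw [this]; gcongr; linarith
    rw [Set.indicator_of_mem hw]
    gcongr
    have : (2:ℝ)^(d+1) * ((2:ℝ)^(d+1))⁻¹^(n+1) = ((2^n)^(d+1))⁻¹ := by
      rw [inv_pow, pow_succ ((2:ℝ)^(d+1)), ← pow_mul, ← pow_mul, mul_comm n]; field_simp
    rw [this]
    gcongr
  calc _ ≤ ∫⁻ w, ∑' i : ℕ, ENNReal.ofReal (2^(d+1) * ((2:ℝ)^(d+1))⁻¹^i) * (ball x (2^i * ρ)).indicator g w :=
        lintegral_mono key
    _ = ∑' i : ℕ, ENNReal.ofReal (2^(d+1) * ((2:ℝ)^(d+1))⁻¹^i) * ∫⁻ w in ball x (2^i * ρ), g w := by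
        rw [lintegral_tsum]
        · congr 1; funext i
          rw [lintegral_const_mul _ (hg.indicator measurableSet_ball), lintegral_indicator measurableSet_ball]
        · intro i
          exact ((hg.indicator measurableSet_ball).const_mul _).aemeasurable
    _ ≤ ∑' i : ℕ, ENNReal.ofReal (2^(d+1) * V * ρ^d * (1/2)^i) := by
        apply ENNReal.tsum_le_tsum
        intro i
        refine (mul_le_mul_right (h (2^i * ρ) (by positivity)) _).trans ?_
        rw [← ENNReal.ofReal_mul (by positivity)]
        apply ENNReal.ofReal_le_ofReal
        apply le_of_eq
        rw [mul_pow, inv_pow, ← pow_mul, ← pow_mul, one_div, inv_pow]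
        have : (2:ℝ)^((d+1)*i) = 2^(i*d) * 2^i := by rw [← pow_add]; ring_nf
        rw [this]; field_simp
    _ = ENNReal.ofReal (2^(d+2) * V * ρ^d) := by
        rw [← ENNReal.ofReal_tsum_of_nonneg]
        · rw [(hasSum_geometric_two.mul_left _).tsum_eq]; congr 1; ring
        · intro i; positivity
        · exact summable_geometric_two.mul_left _

lemma weak_type (d : ℕ) (hd : 0 < d) : ∃ C c : ℝ, 0 < C ∧ 0 < c ∧ ∀ (g : E d → ℝ≥0∞), Measurable g →
    ∀ μ : ℝ, 0 < μ →
      ENNReal.ofReal μ * volume {x : E d | ∃ ρ : ℝ, 0 < ρ ∧ ENNReal.ofReal (μ * ρ^d) < ∫⁻ w in ball x ρ, g w}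
        ≤ ENNReal.ofReal C * ∫⁻ z in {z | ENNReal.ofReal (c * μ) < g z}, g z := by
  have : Nonempty (Fin d) := ⟨⟨0, hd⟩⟩
  set ω := (volume (ball (0 : E d) 1)).toReal with hω
  have hωfin : volume (ball (0 : E d) 1) ≠ ⊤ := measure_ball_lt_top.ne
  have hωpos : 0 < ω := ENNReal.toReal_pos (measure_ball_pos _ _ one_pos).ne' hωfin
  have hωe : volume (ball (0 : E d) 1) = ENNReal.ofReal ω := (ENNReal.ofReal_toReal hωfin).symm
  have volball : ∀ (x : E d) (r : ℝ), 0 < r → volume (ball x r) = ENNReal.ofReal (ω * r^d) := by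
    intro x r hr
    rw [Measure.addHaar_ball _ _ hr.le, finrank_euclideanSpace_fin, hωe, ← ENNReal.ofReal_mul (by positivity), mul_comm]
  have volcball : ∀ (x : E d) (r : ℝ), 0 < r → volume (closedBall x r) = ENNReal.ofReal (ω * r^d) := by
    intro x r hr
    rw [Measure.addHaar_closedBall _ _ hr.le, finrank_euclideanSpace_fin, hωe, ← ENNReal.ofReal_mul (by positivity), mul_comm]
  refine ⟨2 * ω * 5^d, 1 / (2 * ω), by positivity, by positivity, ?_⟩
  intro g hg μ hμ
  set c := 1 / (2 * ω)
  set A := {z | ENNReal.ofReal (c * μ) < g z} with hA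
  have hAm : MeasurableSet A := measurableSet_lt measurable_const hg
  set h := A.indicator g with hh
  have hhm : Measurable h := hg.indicator hAm
  rw [← lintegral_indicator hAm]
  change _ ≤ _ * ∫⁻ z, h z
  set B := {x : E d | ∃ ρ : ℝ, 0 < ρ ∧ ENNReal.ofReal (μ * ρ^d) < ∫⁻ w in ball x ρ, g w} with hB
  by_cases hfin : ∫⁻ z, h z = ⊤
  · rw [hfin, ENNReal.mul_top]
    · exact le_top
    · simp; positivity
  -- each point has a good ball
  have good : ∀ x ∈ B, ∃ ρ : ℝ, 0 < ρ ∧ ENNReal.ofReal (μ / 2 * ρ^d) ≤ ∫⁻ w in ball x ρ, h w := by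
    rintro x ⟨ρ, hρ, hlt⟩
    refine ⟨ρ, hρ, ?_⟩
    have h1 : ∫⁻ w in ball x ρ, g w ≤ ∫⁻ w in ball x ρ, (h w + ENNReal.ofReal (c * μ)) := by
      apply lintegral_mono
      intro w
      by_cases hw : w ∈ A
      · simp [hh, hw]
      · simp only [hh, Set.indicator_of_notMem hw, zero_add]
        simpa [hA] using hw
    rw [lintegral_add_right _ measurable_const, setLIntegral_const, volball x ρ hρ,
      ← ENNReal.ofReal_mul (by positivity)] at h1
    have e1 : c * μ * (ω * ρ^d) = μ / 2 * ρ^d := by simp only [c]; field_simp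
    have e2 : μ * ρ^d = μ / 2 * ρ^d + μ / 2 * ρ^d := by ring
    rw [e1] at h1
    rw [e2, ENNReal.ofReal_add (by positivity) (by positivity)] at hlt
    have := hlt.trans_le h1
    exact (ENNReal.add_lt_add_iff_right ENNReal.ofReal_ne_top).1 this |>.le
  choose! ρ hρ hgood using good
  -- bounded radii
  obtain ⟨R, hR⟩ : ∃ R : ℝ, ∀ a ∈ B, ρ a ≤ R := by
    refine ⟨max 1 ((∫⁻ z, h z).toReal / (μ/2)), ?_⟩
    intro a ha
    by_cases h1 : ρ a ≤ 1
    · exact h1.trans (le_max_left _ _)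
    · refine le_trans ?_ (le_max_right _ _)
      push Not at h1
      have h2 := (hgood a ha).trans (setLIntegral_le_lintegral _ _)
      rw [ENNReal.ofReal_le_iff_le_toReal hfin] at h2
      rw [le_div_iff₀ (by positivity)]
      have h3 : ρ a ≤ ρ a ^ d := le_self_pow₀ h1.le hd.ne'
      nlinarith
  obtain ⟨u, huB, hdisj, hcov⟩ := Vitali.exists_disjoint_subfamily_covering_enlargement_closedBall
    B (fun x => x) ρ R hR 5 (by norm_num)
  have hcount : u.Countable := by
    apply hdisj.countable_of_nonempty_interior
    intro a ha
    refine ⟨a, ?_⟩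
    exact interior_mono ball_subset_closedBall (by rw [isOpen_ball.interior_eq]; exact mem_ball_self (hρ a (huB ha)))
  have hdisj' : u.PairwiseDisjoint fun a => ball a (ρ a) :=
    hdisj.mono fun a => ball_subset_closedBall
  have hBsub : B ⊆ ⋃ b ∈ u, closedBall b (5 * ρ b) := by
    intro a ha
    obtain ⟨b, hb, hsub⟩ := hcov a ha
    simp only [Set.mem_iUnion]
    exact ⟨b, hb, hsub (mem_closedBall_self (hρ a ha).le)⟩
  have : Countable u := hcount.to_subtype
  calc ENNReal.ofReal μ * volume B
      ≤ ENNReal.ofReal μ * ∑' b : u, volume (closedBall (b:E d) (5 * ρ b)) := by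
        gcongr
        exact (measure_mono hBsub).trans (measure_biUnion_le _ hcount _)
    _ = ∑' b : u, ENNReal.ofReal μ * volume (closedBall (b:E d) (5 * ρ b)) := by rw [ENNReal.tsum_mul_left]
    _ ≤ ∑' b : u, ENNReal.ofReal (2 * ω * 5^d) * ∫⁻ w in ball (b:E d) (ρ b), h w := by
        apply ENNReal.tsum_le_tsum
        intro b
        have hb := huB b.2
        rw [volcball _ _ (by have := hρ b hb; positivity)]
        refine le_trans ?_ (mul_le_mul_right (hgood b hb) _)
        rw [← ENNReal.ofReal_mul (by positivity), ← ENNReal.ofReal_mul (by positivity)]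
        apply ENNReal.ofReal_le_ofReal
        rw [mul_pow]
        apply le_of_eq; ring
    _ = ENNReal.ofReal (2 * ω * 5^d) * ∫⁻ w in ⋃ b ∈ u, ball b (ρ b), h w := by
        rw [ENNReal.tsum_mul_left, lintegral_biUnion hcount (fun _ _ => measurableSet_ball) hdisj']
    _ ≤ _ := by
        gcongr
        exact Measure.restrict_le_self

lemma tang_step (d : ℕ) : ∃ C : ℝ, 0 < C ∧ ∀ (v : E d → ℝ) (g : E d → ℝ≥0∞) (x z : E d) (ρ K V : ℝ),
    Measurable g → (∀ w, ENNReal.ofReal (√|v w|) ≤ g w) → 0 < ρ → 0 ≤ K → 0 ≤ V →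
    (∀ ρ : ℝ, 0 < ρ → ∫⁻ w in ball x ρ, g w ≤ ENNReal.ofReal (V * ρ^d)) →
    (∀ w, |v w| ≤ K * (1 + 2 * (‖x - w‖ / ρ))^(2*(d+1))) →
    |heat d (3 * ρ^2 / 4) v z| ≤ C * √K * V * (1 + ‖x - z‖ / ρ)^(2*(d+1)) := by
  obtain ⟨Cp, hCp, hpoly⟩ := gk_poly d (2*(d+1))
  refine ⟨Cp * 2^(d+1) * 2^(d+2), by positivity, ?_⟩
  intro v g x z ρ K V hg hvg hρ hK hV hball hv
  set coef := Cp * (ρ^d)⁻¹ * (1 + ‖x - z‖ / ρ)^(2*(d+1)) * √K * 2^(d+1) with hcoef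
  have hcoef0 : 0 ≤ coef := by positivity
  have hs : 0 < 3 * ρ^2 / 4 := by positivity
  have hpt : ∀ w, gk d (3 * ρ^2 / 4) (z - w) * |v w| ≤
      coef * (((1 + ‖x - w‖ / ρ)^(d+1))⁻¹ * √|v w|) := by
    intro w
    set τ := ‖x - w‖ / ρ with hτ
    set σ := ‖z - w‖ / ρ with hσ
    set θ := ‖x - z‖ / ρ with hθ
    have hτ0 : 0 ≤ τ := by positivity
    have hσ0 : 0 ≤ σ := by positivity
    have hθ0 : 0 ≤ θ := by positivity
    have tri : τ ≤ θ + σ := by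
      rw [hτ, hσ, hθ, ← add_div]
      gcongr
      have : x - w = (x - z) + (z - w) := by abel
      rw [this]; exact norm_add_le _ _
    have h1 : √|v w| ≤ √K * (2^(d+1) * (1 + τ)^(d+1)) := by
      rw [Real.sqrt_le_left (by positivity)]
      refine (hv w).trans ?_
      rw [mul_pow, Real.sq_sqrt hK, ← mul_pow, ← pow_mul, mul_comm (d+1) 2]
      gcongr
      linarith
    have h2 : gk d (3 * ρ^2 / 4) (z - w) ≤ Cp * (ρ^d)⁻¹ * ((1 + θ)^(2*(d+1)) * ((1 + τ)^(2*(d+1)))⁻¹) := by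
      have a1 := hpoly (3 * ρ^2/4) ρ (z - w) hs hρ (by nlinarith [sq_nonneg ρ])
      have a2 : gk d (2 * (3 * ρ^2/4)) (z - w) ≤ (ρ^d)⁻¹ := by
        refine (gk_le (by positivity) _).trans ?_
        have : (ρ^d)⁻¹ = (ρ^2) ^ (-(d:ℝ)/2) := by
          rw [← Real.rpow_natCast ρ 2, ← Real.rpow_mul hρ.le]
          have : ((2:ℕ):ℝ) * (-(d:ℝ)/2) = -(d:ℝ) := by push_cast; ring
          rw [this, Real.rpow_neg hρ.le, Real.rpow_natCast]
        rw [this]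
        apply Real.rpow_le_rpow_of_nonpos (by positivity)
        · have := Real.pi_gt_three
          nlinarith [sq_nonneg ρ]
        · have : (0:ℝ) ≤ d := by positivity
          linarith
      have a3 : (1 + τ)^(2*(d+1)) ≤ (1 + θ)^(2*(d+1)) * (2 + σ)^(2*(d+1)) := by
        rw [← mul_pow]
        gcongr
        nlinarith
      have a4 : (2 + σ)^(2*(d+1)) * gk d (3 * ρ^2 / 4) (z - w) ≤ Cp * (ρ^d)⁻¹ :=
        a1.trans (by gcongr)
      have g0 := gk_nonneg (d := d) hs (z - w)
      rw [← mul_assoc (Cp * (ρ^d)⁻¹), ← div_eq_mul_inv _ ((1 + τ)^(2*(d+1))), le_div_iff₀ (by positivity)]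
      calc gk d (3 * ρ^2 / 4) (z - w) * (1 + τ)^(2*(d+1))
          ≤ gk d (3 * ρ^2 / 4) (z - w) * ((1 + θ)^(2*(d+1)) * (2 + σ)^(2*(d+1))) := by gcongr
        _ = ((2 + σ)^(2*(d+1)) * gk d (3 * ρ^2 / 4) (z - w)) * (1 + θ)^(2*(d+1)) := by ring
        _ ≤ _ := by gcongr
    have h3 : |v w| = √|v w| * √|v w| := (Real.mul_self_sqrt (abs_nonneg _)).symm
    calc gk d (3 * ρ^2 / 4) (z - w) * |v w|
        = gk d (3 * ρ^2 / 4) (z - w) * √|v w| * √|v w| := by rw [mul_assoc, ← h3]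
      _ ≤ (Cp * (ρ^d)⁻¹ * ((1 + θ)^(2*(d+1)) * ((1 + τ)^(2*(d+1)))⁻¹)) * (√K * (2^(d+1) * (1 + τ)^(d+1))) * √|v w| := by
          gcongr
      _ = _ := by
          have : (1 + τ)^(2*(d+1)) = (1+τ)^(d+1) * (1+τ)^(d+1) := by rw [← pow_add]; ring_nf
          rw [this, hcoef]
          field_simp
  have main : ENNReal.ofReal |heat d (3 * ρ^2 / 4) v z| ≤ ENNReal.ofReal (coef * (2^(d+2) * V * ρ^d)) := by
    calc ENNReal.ofReal |heat d (3 * ρ^2 / 4) v z| = ‖heat d (3 * ρ^2 / 4) v z‖ₑ := by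
          rw [← Real.norm_eq_abs, ofReal_norm]
      _ ≤ ∫⁻ w, ‖gk d (3 * ρ^2 / 4) (z - w) * v w‖ₑ := enorm_integral_le_lintegral_enorm _
      _ ≤ ∫⁻ w, ENNReal.ofReal coef * (ENNReal.ofReal (((1 + ‖x - w‖ / ρ)^(d+1))⁻¹) * g w) := by
          apply lintegral_mono
          intro w
          beta_reduce
          rw [← ofReal_norm, norm_mul, Real.norm_of_nonneg (gk_nonneg hs _), Real.norm_eq_abs]
          refine (ENNReal.ofReal_le_ofReal (hpt w)).trans ?_
          rw [ENNReal.ofReal_mul hcoef0, ENNReal.ofReal_mul (p := ((1 + ‖x - w‖ / ρ)^(d+1))⁻¹) (by positivity)]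
          gcongr
          exact hvg w
      _ = ENNReal.ofReal coef * ∫⁻ w, (ENNReal.ofReal (((1 + ‖x - w‖ / ρ)^(d+1))⁻¹) * g w) := by
          rw [lintegral_const_mul']
          exact ENNReal.ofReal_ne_top
      _ ≤ ENNReal.ofReal coef * ENNReal.ofReal (2^(d+2) * V * ρ^d) := by
          gcongr
          exact ball_sum x g hg V hV hball ρ hρ
      _ = _ := by rw [ENNReal.ofReal_mul hcoef0]
  rw [ENNReal.ofReal_le_ofReal_iff (by positivity)] at main
  refine main.trans (le_of_eq ?_)
  rw [hcoef]; field_simp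

lemma tangential (d : ℕ) : ∃ C : ℝ, 0 < C ∧ ∀ (f : E d → ℝ) (g : E d → ℝ≥0∞) (x : E d) (r V : ℝ),
    Integrable f → Measurable g → 0 < r →
    (∀ (k : ℕ) w, ENNReal.ofReal (√|heat d ((r/2^k)^2) f w|) ≤ g w) → 0 ≤ V →
    (∀ ρ : ℝ, 0 < ρ → ∫⁻ w in ball x ρ, g w ≤ ENNReal.ofReal (V * ρ^d)) →
    ∀ (k : ℕ) z, |heat d ((r/2^k)^2) f z| ≤ C * V^2 * (1 + ‖x - z‖ / (r/2^k))^(2*(d+1)) := by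
  obtain ⟨C1, hC1, hstep⟩ := tang_step d
  refine ⟨(2^d * C1)^2, by positivity, ?_⟩
  intro f g x r V hf hg hr hug hV hball L z0
  set κ : ℕ → ℝ := fun k => ((2:ℝ)^d)⁻¹^(k - L) with hκ
  have κpos : ∀ k, 0 < κ k := fun k => by simp only [hκ]; positivity
  have two1 : (1:ℝ) ≤ 2^d := one_le_pow₀ (by norm_num)
  have κle : ∀ k, κ k ≤ 1 := fun k => pow_le_one₀ (by positivity) (inv_le_one_of_one_le₀ two1)
  have κs : ∀ k, κ k ≤ 2^d * κ (k+1) := by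
    intro k
    have h1 : κ k = 2^d * ((2:ℝ)^d)⁻¹^((k - L)+1) := by
      simp only [hκ]; rw [pow_succ]; field_simp
    rw [h1]
    simp only [hκ]
    gcongr ?_ * ?_
    apply pow_le_pow_of_le_one (by positivity) (inv_le_one_of_one_le₀ two1)
    omega
  set F : ℕ × E d → ℝ := fun p => κ p.1 * |heat d ((r/2^p.1)^2) f p.2| / (1 + ‖x - p.2‖ / (r/2^p.1))^(2*(d+1)) with hF
  have hrk : ∀ k : ℕ, 0 < r/2^k := fun k => by positivity
  have denpos : ∀ p : ℕ × E d, 1 ≤ (1 + ‖x - p.2‖ / (r/2^p.1))^(2*(d+1)) := by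
    intro p
    apply one_le_pow₀
    have : 0 ≤ ‖x - p.2‖ / (r/2^p.1) := by positivity
    linarith
  have F0 : ∀ p, 0 ≤ F p := fun p => by
    simp only [hF]; have := κpos p.1; positivity
  have bdd : BddAbove (Set.range F) := by
    refine ⟨2^(d*L) * ((4 * π * r^2) ^ (-(d:ℝ)/2) * ∫ z, |f z|), ?_⟩
    rintro _ ⟨p, rfl⟩
    have I0 : 0 ≤ ∫ z, |f z| := integral_nonneg fun _ => abs_nonneg _
    have h1 := heat_abs_le (d := d) (s := (r/2^p.1)^2) (by positivity) hf p.2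
    have h2 : (4 * π * (r/2^p.1)^2) ^ (-(d:ℝ)/2) = (4 * π * r^2) ^ (-(d:ℝ)/2) * 2^(d*p.1) := by
      have : 4 * π * (r/2^p.1)^2 = 4 * π * r^2 * ((2^p.1)^2)⁻¹ := by field_simp
      rw [this, Real.mul_rpow (by positivity) (by positivity)]
      congr 1
      rw [Real.inv_rpow (by positivity), ← Real.rpow_neg (by positivity), ← Real.rpow_natCast _ 2, ← Real.rpow_mul (by positivity)]
      have : ((2:ℕ):ℝ) * (-(-(d:ℝ)/2)) = d := by push_cast; ring
      rw [this, Real.rpow_natCast, ← pow_mul, mul_comm]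
    have h3 : κ p.1 * 2^(d*p.1) ≤ 2^(d*L) := by
      simp only [hκ]
      rw [inv_pow, ← pow_mul, inv_mul_le_iff₀ (by positivity), ← pow_add]
      apply pow_le_pow_right₀ (by norm_num)
      rw [← mul_add]
      apply Nat.mul_le_mul_left; omega
    calc F p ≤ κ p.1 * |heat d ((r/2^p.1)^2) f p.2| := div_le_self (by have := κpos p.1; positivity) (denpos p)
      _ ≤ κ p.1 * ((4 * π * r^2) ^ (-(d:ℝ)/2) * 2^(d*p.1) * ∫ z, |f z|) := by
          rw [h2] at h1
          exact mul_le_mul_of_nonneg_left h1 (κpos _).le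
      _ = (κ p.1 * 2^(d*p.1)) * ((4 * π * r^2) ^ (-(d:ℝ)/2) * ∫ z, |f z|) := by ring
      _ ≤ _ := by gcongr
  set K := ⨆ p, F p with hK
  have K0 : 0 ≤ K := Real.iSup_nonneg F0
  have hFK : ∀ p, F p ≤ K := fun p => le_ciSup bdd p
  have hub : ∀ k w, |heat d ((r/2^k)^2) f w| ≤ K / κ k * (1 + ‖x - w‖ / (r/2^k))^(2*(d+1)) := by
    intro k w
    have h1 := hFK (k, w)
    simp only [hF] at h1
    rw [div_le_iff₀ (lt_of_lt_of_le one_pos (denpos (k,w)))] at h1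
    rw [div_mul_eq_mul_div, le_div_iff₀ (κpos k)]
    linarith
  have improve : K ≤ 2^d * C1 * √K * V := by
    apply ciSup_le
    rintro ⟨k, z⟩
    have e1 : heat d ((r/2^k)^2) f z = heat d (3 * (r/2^k)^2/4) (heat d ((r/2^(k+1))^2) f) z := by
      rw [heat_heat (by positivity) (by positivity) hf]
      congr 1
      rw [pow_succ]; field_simp; ring
    have h1 := hstep (heat d ((r/2^(k+1))^2) f) g x z (r/2^k) (K / κ (k+1)) V hg (hug (k+1)) (hrk k)
      (div_nonneg K0 (κpos _).le) hV hball (by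
        intro w
        refine (hub (k+1) w).trans (le_of_eq ?_)
        congr 3
        rw [pow_succ]; field_simp)
    rw [← e1] at h1
    simp only [hF]
    rw [div_le_iff₀ (lt_of_lt_of_le one_pos (denpos (k,z)))]
    have h2 : κ k * √(K / κ (k+1)) ≤ 2^d * √K := by
      calc κ k * √(K / κ (k+1)) ≤ 2^d * κ (k+1) * √(K / κ (k+1)) := by gcongr; exact κs k
        _ = 2^d * (√(κ (k+1)) * √K) := by
            rw [Real.sqrt_div K0, mul_assoc]
            have := Real.sqrt_pos.2 (κpos (k+1))
            have h := Real.mul_self_sqrt (κpos (k+1)).le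
            nth_rewrite 1 [← h]
            field_simp
        _ ≤ 2^d * (1 * √K) := by
            gcongr
            exact Real.sqrt_le_iff.2 ⟨by norm_num, by simpa using κle (k+1)⟩
        _ = _ := by ring
    calc κ k * |heat d ((r/2^k)^2) f z| ≤ κ k * (C1 * √(K / κ (k+1)) * V * (1 + ‖x - z‖ / (r/2^k))^(2*(d+1))) :=
          mul_le_mul_of_nonneg_left h1 (κpos _).le
      _ = (κ k * √(K / κ (k+1))) * (C1 * V * (1 + ‖x - z‖ / (r/2^k))^(2*(d+1))) := by ring
      _ ≤ (2^d * √K) * (C1 * V * (1 + ‖x - z‖ / (r/2^k))^(2*(d+1))) := by gcongr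
      _ = _ := by ring
  have hKV : K ≤ (2^d * C1)^2 * V^2 := by
    by_cases hz : √K = 0
    · rw [Real.sqrt_eq_zero K0] at hz
      rw [hz]; positivity
    · have hp : 0 < √K := lt_of_le_of_ne (Real.sqrt_nonneg _) (Ne.symm hz)
      have h1 : √K ≤ 2^d * C1 * V := by
        have : √K * √K ≤ (2^d * C1 * V) * √K := by
          rw [Real.mul_self_sqrt K0]; linarith
        exact le_of_mul_le_mul_right this hp
      calc K = √K^2 := (Real.sq_sqrt K0).symm
        _ ≤ (2^d * C1 * V)^2 := by gcongr
        _ = _ := by ring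
  have := hub L z0
  have κL : κ L = 1 := by simp [hκ]
  rw [κL, div_one] at this
  refine this.trans ?_
  gcongr

lemma level (d : ℕ) (hd : 0 < d) : ∃ C : ℝ, 0 < C ∧ ∀ (f : E d → ℝ) (r M : ℝ) (N : ℕ), Integrable f → 0 < r →
    0 ≤ M → 0 < N → ∫⁻ x, (⨆ k : ℕ, ENNReal.ofReal |heat d ((r/2^k)^2) f x|) ≤ ENNReal.ofReal M →
    ∃ i < N, ∃ O : Set (E d), IsOpen O ∧
      (∀ x ∉ O, ∀ (k : ℕ) z, |heat d ((r/2^k)^2) f z| ≤ 4^i * (1 + ‖x - z‖ / (r/2^k))^(2*(d+1))) ∧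
      ENNReal.ofReal (4^i) * volume O ≤ ENNReal.ofReal (C * M / N) := by
  obtain ⟨Ct, hCt, htan⟩ := tangential d
  obtain ⟨Cw, c, hCw, hc, hweak⟩ := weak_type d hd
  have hsC : 0 < √Ct := Real.sqrt_pos.2 hCt
  set c0 := c / √Ct with hc0
  have hc0p : 0 < c0 := by positivity
  refine ⟨2 * (√Ct * √Ct * Cw / c), by positivity, ?_⟩
  intro f r M N hf hr hM hN hW
  set W : E d → ℝ≥0∞ := fun x => ⨆ k : ℕ, ENNReal.ofReal |heat d ((r/2^k)^2) f x| with hWdef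
  have hWm : Measurable W := by
    refine Measurable.iSup fun k => ?_
    have := (heat_continuous (d := d) (s := (r/2^k)^2) (by positivity) hf).measurable
    fun_prop
  set g : E d → ℝ≥0∞ := fun x => W x ^ (1/2:ℝ) with hgdef
  have hgm : Measurable g := hWm.pow_const _
  have hgg : ∀ x, g x * g x = W x := by
    intro x
    simp only [hgdef]
    rw [← ENNReal.rpow_add_of_nonneg _ _ (by norm_num) (by norm_num)]
    norm_num
  have hug : ∀ (k : ℕ) w, ENNReal.ofReal (√|heat d ((r/2^k)^2) f w|) ≤ g w := by
    intro k w
    simp only [hgdef]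
    rw [Real.sqrt_eq_rpow, ← ENNReal.ofReal_rpow_of_nonneg (abs_nonneg _) (by norm_num)]
    gcongr
    exact le_iSup (fun k : ℕ => ENNReal.ofReal |heat d ((r/2^k)^2) f w|) k
  set O : ℕ → Set (E d) := fun i => ⋃ (k : ℕ) (z : E d), {x | 4^i * (1 + ‖x - z‖ / (r/2^k))^(2*(d+1)) < |heat d ((r/2^k)^2) f z|} with hO
  have hOopen : ∀ i, IsOpen (O i) := by
    intro i
    refine isOpen_iUnion fun k => isOpen_iUnion fun z => ?_
    exact isOpen_lt (by fun_prop) continuous_const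
  have hOgood : ∀ i, ∀ x ∉ O i, ∀ (k : ℕ) z, |heat d ((r/2^k)^2) f z| ≤ 4^i * (1 + ‖x - z‖ / (r/2^k))^(2*(d+1)) := by
    intro i x hx k z
    simp only [hO, Set.mem_iUnion, not_exists, Set.mem_ofPred_eq, not_lt] at hx
    exact hx k z
  have hOsub : ∀ i, O i ⊆ {x : E d | ∃ ρ : ℝ, 0 < ρ ∧ ENNReal.ofReal (2^i / √Ct * ρ^d) < ∫⁻ w in ball x ρ, g w} := by
    intro i x hx
    by_contra hcon
    simp only [Set.mem_ofPred_eq, not_exists, not_and, not_lt] at hcon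
    have h1 := htan f g x r (2^i / √Ct) hf hgm hr hug (by positivity) hcon
    simp only [hO, Set.mem_iUnion, Set.mem_ofPred_eq] at hx
    obtain ⟨k, z, hkz⟩ := hx
    have h2 := h1 k z
    have e : Ct * (2^i / √Ct)^2 = 4^i := by
      rw [div_pow, Real.sq_sqrt hCt.le, ← pow_mul, mul_comm i 2, pow_mul]; field_simp; norm_num
    rw [e] at h2
    linarith
  have hpt : ∀ i, ENNReal.ofReal (4^i) * volume (O i) ≤ ENNReal.ofReal (√Ct * √Ct * Cw / c) *
      ∫⁻ z, (if ENNReal.ofReal (c0 * 2^i) < g z then ENNReal.ofReal (c0 * 2^i) else 0) * g z := by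
    intro i
    have h1 := hweak g hgm (2^i / √Ct) (by positivity)
    have h2 := (mul_le_mul_right (measure_mono (μ := volume) (hOsub i)) (ENNReal.ofReal (2^i / √Ct))).trans h1
    have e1 : (4:ℝ)^i = (2^i * √Ct) * (2^i / √Ct) := by
      have : (4:ℝ)^i = 2^i * 2^i := by rw [← mul_pow]; norm_num
      rw [this]; field_simp
    have e2 : c * (2^i / √Ct) = c0 * 2^i := by rw [hc0]; field_simp
    rw [e2] at h2
    have hm : MeasurableSet {z | ENNReal.ofReal (c0 * 2^i) < g z} := measurableSet_lt measurable_const hgm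
    calc ENNReal.ofReal (4^i) * volume (O i)
        = ENNReal.ofReal (2^i * √Ct) * (ENNReal.ofReal (2^i / √Ct) * volume (O i)) := by
          rw [e1, ENNReal.ofReal_mul (by positivity), mul_assoc]
      _ ≤ ENNReal.ofReal (2^i * √Ct) * (ENNReal.ofReal Cw * ∫⁻ z in {z | ENNReal.ofReal (c0 * 2^i) < g z}, g z) := by
          gcongr
      _ = ENNReal.ofReal (√Ct * √Ct * Cw / c) * (ENNReal.ofReal (c0 * 2^i) * ∫⁻ z in {z | ENNReal.ofReal (c0 * 2^i) < g z}, g z) := by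
          rw [← mul_assoc, ← mul_assoc, ← ENNReal.ofReal_mul (by positivity), ← ENNReal.ofReal_mul (by positivity)]
          congr 2
          rw [hc0]; field_simp
      _ = _ := by
          congr 1
          rw [← lintegral_indicator hm, ← lintegral_const_mul' _ _ ENNReal.ofReal_ne_top]
          congr 1; funext z
          by_cases hz : ENNReal.ofReal (c0 * 2^i) < g z
          · simp [hz]
          · simp [hz]
  have hsum : ∑ i ∈ Finset.range N, ENNReal.ofReal (4^i) * volume (O i) ≤
      ∑ i ∈ Finset.range N, ENNReal.ofReal (2 * (√Ct * √Ct * Cw / c) * M / N) := by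
    calc ∑ i ∈ Finset.range N, ENNReal.ofReal (4^i) * volume (O i)
        ≤ ∑ i ∈ Finset.range N, ENNReal.ofReal (√Ct * √Ct * Cw / c) *
      ∫⁻ z, (if ENNReal.ofReal (c0 * 2^i) < g z then ENNReal.ofReal (c0 * 2^i) else 0) * g z :=
          Finset.sum_le_sum fun i _ => hpt i
      _ = ENNReal.ofReal (√Ct * √Ct * Cw / c) * ∫⁻ z, (∑ i ∈ Finset.range N, (if ENNReal.ofReal (c0 * 2^i) < g z then ENNReal.ofReal (c0 * 2^i) else 0)) * g z := by
          rw [← Finset.mul_sum, ← lintegral_finsetSum]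
          · simp_rw [Finset.sum_mul]
          · intro i _
            refine Measurable.mul ?_ hgm
            exact Measurable.ite (measurableSet_lt measurable_const hgm) measurable_const measurable_const
      _ ≤ ENNReal.ofReal (√Ct * √Ct * Cw / c) * ∫⁻ z, 2 * W z := by
          refine mul_le_mul_right (lintegral_mono fun z => ?_) _
          beta_reduce
          rw [← hgg z, ← mul_assoc]
          gcongr
          exact dyadic_up_enn (g z) c0 hc0p N
      _ = ENNReal.ofReal (√Ct * √Ct * Cw / c) * (2 * ∫⁻ z, W z) := by
          rw [lintegral_const_mul' _ _ (by norm_num)]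
      _ ≤ ENNReal.ofReal (√Ct * √Ct * Cw / c) * (2 * ENNReal.ofReal M) := by gcongr
      _ = ENNReal.ofReal (2 * (√Ct * √Ct * Cw / c) * M) := by
          have : (2:ℝ≥0∞) = ENNReal.ofReal 2 := by simp
          rw [this, ← ENNReal.ofReal_mul (by norm_num), ← ENNReal.ofReal_mul (by positivity)]
          congr 1; ring
      _ = _ := by
          rw [Finset.sum_const, Finset.card_range, nsmul_eq_mul, ← ENNReal.ofReal_natCast, ← ENNReal.ofReal_mul (by positivity)]
          congr 1
          have : (N:ℝ) ≠ 0 := by positivity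
          field_simp
  obtain ⟨i, hi, hle⟩ : ∃ i ∈ Finset.range N, ENNReal.ofReal (4^i) * volume (O i) ≤
      ENNReal.ofReal (2 * (√Ct * √Ct * Cw / c) * M / N) := by
    by_contra hcon
    push Not at hcon
    exact absurd hsum (not_le.2 (ENNReal.sum_lt_sum_of_nonempty (by simpa using hN.ne') hcon))
  exact ⟨i, Finset.mem_range.1 hi, O i, hOopen i, hOgood i, hle⟩

lemma decay (d m : ℕ) : ∃ C : ℝ, 0 < C ∧ ∀ (D p : E d → ℝ) (B ρ s : ℝ), (∀ z, 0 ≤ D z) →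
    (∀ z w, D z ≤ D w + ‖z - w‖) → Integrable p → (∀ w, 0 ≤ p w) → (∀ w, p w ≤ B) →
    0 < ρ → (∀ w, p w ≠ 0 → D w ≤ 2 * ρ) → 0 < s → s ≤ 4 * ρ^2 →
    ∀ z, (D z / ρ)^m * heat d s p z ≤ C * B := by
  obtain ⟨C, hC, h⟩ := gk_poly d m
  refine ⟨C, hC, ?_⟩
  intro D p B ρ s hD0 hD hp hp0 hpB hρ hpD hs hsρ z
  have hB : 0 ≤ B := (hp0 0).trans (hpB 0)
  have e1 : C * B = ∫ w, C * B * gk d (2*s) (z - w) := by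
    rw [integral_const_mul, gk_shift_integral (by positivity), mul_one]
  rw [e1]
  unfold heat
  rw [← integral_const_mul]
  refine integral_mono ((heat_int hs hp z).const_mul _) ((gk_shift_integrable (by positivity) z).const_mul _) fun w => ?_
  beta_reduce
  have g2 : 0 ≤ gk d (2*s) (z-w) := gk_nonneg (by positivity) _
  have g1 : 0 ≤ gk d s (z-w) := gk_nonneg (by positivity) _
  by_cases hw : p w = 0
  · rw [hw]; simp only [mul_zero]; positivity
  · have h1 : D z / ρ ≤ 2 + ‖z - w‖ / ρ := by
      rw [div_le_iff₀ hρ, add_mul, div_mul_cancel₀ _ hρ.ne']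
      linarith [hD z w, hpD w hw]
    have h2 : (D z / ρ)^m ≤ (2 + ‖z - w‖ / ρ)^m := pow_le_pow_left₀ (div_nonneg (hD0 z) hρ.le) h1 m
    have h3 := h s ρ (z - w) hs hρ hsρ
    calc (D z / ρ)^m * (gk d s (z - w) * p w) ≤ (2 + ‖z - w‖ / ρ)^m * (gk d s (z - w) * B) := by
          gcongr
          · exact mul_nonneg g1 (hp0 w)
          · exact hpB w
      _ = ((2 + ‖z - w‖ / ρ)^m * gk d s (z - w)) * B := by ring
      _ ≤ (C * gk d (2*s) (z - w)) * B := by gcongr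
      _ = _ := by ring

def qs (d : ℕ) (r : ℝ) (y : E d) (A : ℕ → Set (E d)) : ℕ → E d → ℝ
  | 0 => fun z => gk d (r^2) (y - z)
  | k+1 => heat d (3*(r/2^(k+1))^2) ((A k).indicator (qs d r y A k))

def qt (d : ℕ) (r : ℝ) (y : E d) (A : ℕ → Set (E d)) (k : ℕ) : E d → ℝ :=
  heat d ((r/2^k)^2) ((A k).indicator (qs d r y A k))

lemma rk_lt {r : ℝ} (hr : 0 < r) (k : ℕ) : (r/2^k)^2 ≤ r^2 := by
  have : r / 2^k ≤ r := div_le_self hr.le (one_le_pow₀ (by norm_num))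
  gcongr

lemma ind_int {q : E d → ℝ} (hq : Integrable q) {A : Set (E d)} (hA : MeasurableSet A) :
    Integrable (A.indicator q) := hq.indicator hA

lemma ind_le {q : E d → ℝ} (hq : ∀ z, 0 ≤ q z) (A : Set (E d)) (z : E d) : A.indicator q z ≤ q z := by
  by_cases h : z ∈ A
  · simp [h]
  · simp [h, hq z]

lemma qs_prop {r : ℝ} (hr : 0 < r) (y : E d) {A : ℕ → Set (E d)} (hA : ∀ k, MeasurableSet (A k)) (k : ℕ) :
    (∀ z, 0 ≤ qs d r y A k z) ∧ (∀ z, qs d r y A k z ≤ gk d (2*r^2-(r/2^k)^2) (y - z)) ∧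
    Integrable (qs d r y A k) := by
  induction k with
  | zero =>
    refine ⟨fun z => gk_nonneg (by positivity) _, fun z => ?_, gk_shift_integrable (by positivity) y⟩
    simp only [qs]
    apply le_of_eq; congr 1; ring
  | succ k ih =>
    obtain ⟨h0, h1, h2⟩ := ih
    have hs : 0 < 3*(r/2^(k+1))^2 := by positivity
    refine ⟨fun z => ?_, fun z => ?_, ?_⟩
    · exact heat_nonneg hs (fun w => Set.indicator_nonneg (fun w _ => h0 w) w) z
    · have hpos : 0 < 2*r^2-(r/2^k)^2 := by
        have := rk_lt hr k
        have : 0 < r^2 := by positivity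
        linarith
      have := heat_mono hs (ind_int h2 (hA k)) (gk_shift_integrable hpos y)
        (fun w => (ind_le h0 (A k) w).trans (h1 w)) z
      rw [heat_gk hpos hs] at this
      simp only [qs]
      refine this.trans (le_of_eq ?_)
      congr 1
      rw [pow_succ]; field_simp; ring
    · exact heat_integrable hs (ind_int h2 (hA k))

lemma qs_le {r : ℝ} (hr : 0 < r) (y : E d) {A : ℕ → Set (E d)} (hA : ∀ k, MeasurableSet (A k)) (k : ℕ) (z : E d) :
    qs d r y A k z ≤ (4 * π * r^2) ^ (-(d:ℝ)/2) := by
  have h := (qs_prop hr y hA k).2.1 z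
  have h3 := rk_lt hr k
  have h2 : 0 < r^2 := by positivity
  have hpos : 0 < 2*r^2-(r/2^k)^2 := by linarith
  refine h.trans ((gk_le hpos _).trans ?_)
  apply Real.rpow_le_rpow_of_nonpos (by positivity)
  · have := Real.pi_pos
    gcongr; linarith
  · have : (0:ℝ) ≤ d := by positivity
    linarith

lemma qt_prop {r : ℝ} (hr : 0 < r) (y : E d) {A : ℕ → Set (E d)} (hA : ∀ k, MeasurableSet (A k)) (k : ℕ) :
    (∀ z, 0 ≤ qt d r y A k z) ∧ (∀ z, qt d r y A k z ≤ gk d (2*r^2) (y - z)) ∧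
    Integrable (qt d r y A k) ∧ Continuous (qt d r y A k) := by
  obtain ⟨h0, h1, h2⟩ := qs_prop hr y hA k
  have hs : 0 < (r/2^k)^2 := by positivity
  refine ⟨fun z => ?_, fun z => ?_, heat_integrable hs (ind_int h2 (hA k)), heat_continuous hs (ind_int h2 (hA k))⟩
  · exact heat_nonneg hs (fun w => Set.indicator_nonneg (fun w _ => h0 w) w) z
  · have hpos : 0 < 2*r^2-(r/2^k)^2 := by
      have := rk_lt hr k
      have : 0 < r^2 := by positivity
      linarith
    have := heat_mono hs (ind_int h2 (hA k)) (gk_shift_integrable hpos y)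
      (fun w => (ind_le h0 (A k) w).trans (h1 w)) z
    rw [heat_gk hpos hs] at this
    refine this.trans (le_of_eq ?_)
    congr 1
    ring

lemma bdd_mul_int {q u : E d → ℝ} {B : ℝ} (hq : Integrable q) (hu : Integrable u)
    (hB : ∀ z, |q z| ≤ B) : Integrable (fun z => q z * u z) :=
  hu.bdd_mul (c := B) hq.aestronglyMeasurable (Eventually.of_forall fun z => hB z)

lemma split_ind {q u : E d → ℝ} {B : ℝ} (hq : Integrable q) (hu : Integrable u)
    (hB : ∀ z, |q z| ≤ B) {A : Set (E d)} (hA : MeasurableSet A) :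
    ∫ z, q z * u z = (∫ z, Aᶜ.indicator q z * u z) + ∫ z, A.indicator q z * u z := by
  have hi : ∀ (S : Set (E d)) z, |S.indicator q z| ≤ B := by
    intro S z
    by_cases h : z ∈ S
    · simpa [h] using hB z
    · simpa [h] using (abs_nonneg _).trans (hB z)
  rw [← integral_add (bdd_mul_int (hq.indicator hA.compl) hu (hi _)) (bdd_mul_int (hq.indicator hA) hu (hi _))]
  congr 1; funext z
  by_cases h : z ∈ A <;> simp [h]

lemma abs_ind_le {q : E d → ℝ} {B : ℝ} (h0 : ∀ z, 0 ≤ q z) (hB : ∀ z, q z ≤ B) (A : Set (E d)) (z : E d) :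
    |A.indicator q z| ≤ B := by
  rw [abs_of_nonneg (Set.indicator_nonneg (fun w _ => h0 w) z)]
  exact (ind_le h0 A z).trans (hB z)

lemma qs_tele {r : ℝ} (hr : 0 < r) (y : E d) {A : ℕ → Set (E d)} (hA : ∀ k, MeasurableSet (A k))
    {f : E d → ℝ} (hf : Integrable f) (K : ℕ) :
    heat d (2*r^2) f y = (∑ k ∈ Finset.range (K+1), (∫ z, (A k)ᶜ.indicator (qs d r y A k) z * heat d ((r/2^k)^2) f z))
      + ∫ z, qt d r y A K z * f z := by
  have hB : ∀ k z, |qs d r y A k z| ≤ (4 * π * r^2) ^ (-(d:ℝ)/2) := fun k z => by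
    rw [abs_of_nonneg ((qs_prop hr y hA k).1 z)]; exact qs_le hr y hA k z
  have hu : ∀ k : ℕ, Integrable (heat d ((r/2^k)^2) f) := fun k => heat_integrable (by positivity) hf
  have main : ∀ K : ℕ, heat d (2*r^2) f y = (∑ k ∈ Finset.range K, (∫ z, (A k)ᶜ.indicator (qs d r y A k) z * heat d ((r/2^k)^2) f z))
      + ∫ z, qs d r y A K z * heat d ((r/2^K)^2) f z := by
    intro K
    induction K with
    | zero =>
      simp only [Finset.range_zero, Finset.sum_empty, zero_add, qs, pow_zero, div_one]
      have := heat_heat (a := r^2) (b := r^2) (by positivity) (by positivity) hf y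
      rw [two_mul, ← this]; rfl
    | succ k ih =>
      rw [ih, Finset.sum_range_succ, add_assoc]
      congr 1
      rw [split_ind (qs_prop hr y hA k).2.2 (hu k) (hB k) (hA k)]
      congr 1
      simp only [qs]
      rw [← heat_symm (by positivity) (hu (k+1)) ((qs_prop hr y hA k).2.2.indicator (hA k)).aestronglyMeasurable
        ((4 * π * r^2) ^ (-(d:ℝ)/2)) (abs_ind_le (qs_prop hr y hA k).1 (qs_le hr y hA k) _)]
      congr 1; funext z
      congr 1
      rw [heat_heat (by positivity) (by positivity) hf]
      congr 1
      rw [pow_succ]; field_simp; ring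
  rw [main K, Finset.sum_range_succ, add_assoc]
  congr 1
  rw [split_ind (qs_prop hr y hA K).2.2 (hu K) (hB K) (hA K)]
  congr 1
  rw [heat_symm (by positivity) hf ((qs_prop hr y hA K).2.2.indicator (hA K)).aestronglyMeasurable
        ((4 * π * r^2) ^ (-(d:ℝ)/2)) (abs_ind_le (qs_prop hr y hA K).1 (qs_le hr y hA K) _)]
  rfl

lemma qs_one {r : ℝ} (hr : 0 < r) (y : E d) {A : ℕ → Set (E d)} (hA : ∀ k, MeasurableSet (A k)) (K : ℕ) :
    1 = (∑ k ∈ Finset.range (K+1), ∫ z, (A k)ᶜ.indicator (qs d r y A k) z) + ∫ z, qt d r y A K z := by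
  have hsp : ∀ k, ∫ z, qs d r y A k z = (∫ z, (A k)ᶜ.indicator (qs d r y A k) z) + ∫ z, (A k).indicator (qs d r y A k) z := by
    intro k
    have hq := (qs_prop hr y hA k).2.2
    rw [← integral_add (hq.indicator (hA k).compl) (hq.indicator (hA k))]
    congr 1; funext z
    by_cases h : z ∈ A k <;> simp [h]
  have main : ∀ K : ℕ, 1 = (∑ k ∈ Finset.range K, ∫ z, (A k)ᶜ.indicator (qs d r y A k) z) + ∫ z, qs d r y A K z := by
    intro K
    induction K with
    | zero =>
      simp only [Finset.range_zero, Finset.sum_empty, zero_add, qs]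
      rw [gk_shift_integral (by positivity)]
    | succ k ih =>
      rw [ih, Finset.sum_range_succ, add_assoc, hsp k]
      congr 2
      simp only [qs]
      rw [heat_integral (by positivity) ((qs_prop hr y hA k).2.2.indicator (hA k))]
  rw [main K, Finset.sum_range_succ, add_assoc, hsp K]
  congr 2
  unfold qt
  rw [heat_integral (by positivity) ((qs_prop hr y hA K).2.2.indicator (hA K))]

lemma stp_bound (d : ℕ) (r : ℝ) (hr : 0 < r) : ∃ C : ℝ, 0 < C ∧ ∀ (f : E d → ℝ) (y : E d) (l : ℝ) (O : Set (E d)),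
    Integrable f → 0 ≤ l → IsOpen O → volume O < volume (ball (0 : E d) r) →
    (∀ x ∉ O, ∀ (k : ℕ) z, |heat d ((r/2^k)^2) f z| ≤ l * (1 + ‖x - z‖ / (r/2^k))^(2*(d+1))) →
    (∀ᵐ x, x ∉ O → |f x| ≤ l) →
    |heat d (2*r^2) f y - ∫ z in Oᶜ, gk d (2*r^2) (y - z) * f z| ≤ C * l * (volume O).toReal := by
  obtain ⟨Cp, hCp, hdec⟩ := decay d (2*(d+1)+1)
  set m := 2*(d+1) with hm
  set B0 : ℝ := (4 * π * r^2) ^ (-(d:ℝ)/2) with hB0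
  have hB0p : 0 < B0 := by positivity
  refine ⟨2 * ((2^m+1) * (Cp * B0)), by positivity, ?_⟩
  intro f y l O hf hl hO hvol hgood hfl
  have hne : (Oᶜ).Nonempty := by
    by_contra h
    rw [Set.not_nonempty_iff_eq_empty, Set.compl_empty_iff] at h
    rw [h] at hvol
    exact absurd (measure_mono (Set.subset_univ _)) (not_le.2 hvol)
  have hvfin : volume O ≠ ⊤ := hvol.ne_top
  set D : E d → ℝ := fun z => infDist z Oᶜ with hD
  have hD0 : ∀ z, 0 ≤ D z := fun z => infDist_nonneg
  have hDl : ∀ z w, D z ≤ D w + ‖z - w‖ := fun z w => by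
    rw [← dist_eq_norm]; exact infDist_le_infDist_add_dist
  have hDc : Continuous D := continuous_infDist_pt _
  have hDO : ∀ z, 0 < D z → z ∈ O := by
    intro z hz
    by_contra h
    have : D z = 0 := infDist_zero_of_mem (by simpa using h)
    linarith
  have hDO' : ∀ z ∈ O, 0 < D z := by
    intro z hz
    exact (hO.isClosed_compl.notMem_iff_infDist_pos hne).1 (by simpa using hz)
  have hDr : ∀ z, D z ≤ r := by
    intro z
    by_contra h
    push Not at h
    have h1 : ball z r ⊆ O := by
      intro w hw
      apply hDO
      rw [mem_ball, dist_eq_norm, norm_sub_rev] at hw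
      linarith [hDl z w]
    have h2 := measure_mono (μ := volume) h1
    rw [Measure.addHaar_ball_center] at h2
    exact absurd h2 (not_le.2 hvol)
  set A : ℕ → Set (E d) := fun k => {z | D z ≤ r/2^k} with hAdef
  have hA : ∀ k, MeasurableSet (A k) := fun k => (isClosed_le hDc continuous_const).measurableSet
  have hrk : ∀ k : ℕ, 0 < r/2^k := fun k => by positivity
  have hu : ∀ (k : ℕ) z, |heat d ((r/2^k)^2) f z| ≤ l * (1 + D z / (r/2^k))^m := by
    intro k z
    obtain ⟨x, hx, hxe⟩ := hO.isClosed_compl.exists_infDist_eq_dist hne z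
    have := hgood x (by simpa using hx) k z
    rwa [norm_sub_rev, ← dist_eq_norm, ← hxe] at this
  have hq0 := fun k => (qs_prop hr y hA k).1
  have hqi := fun k => (qs_prop hr y hA k).2.2
  have hqB := fun k => qs_le hr y hA k
  have hdk : ∀ k z, (D z / (r/2^(k+1)))^(m+1) * qs d r y A (k+1) z ≤ Cp * B0 := by
    intro k z
    refine hdec D _ B0 (r/2^(k+1)) (3*(r/2^(k+1))^2) hD0 hDl ((hqi k).indicator (hA k))
      (fun w => Set.indicator_nonneg (fun w _ => hq0 k w) w) (fun w => (ind_le (hq0 k) _ w).trans (hqB k w))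
      (hrk _) ?_ (by positivity) ?_ z
    · intro w hw
      have hwA : w ∈ A k := Set.mem_of_indicator_ne_zero hw
      have : D w ≤ r/2^k := hwA
      refine this.trans (le_of_eq ?_)
      rw [pow_succ]; field_simp
    · have := sq_nonneg (r/2^(k+1)); linarith
  have hdt : ∀ k z, (D z / (r/2^k))^(m+1) * qt d r y A k z ≤ Cp * B0 := by
    intro k z
    refine hdec D _ B0 (r/2^k) ((r/2^k)^2) hD0 hDl ((hqi k).indicator (hA k))
      (fun w => Set.indicator_nonneg (fun w _ => hq0 k w) w) (fun w => (ind_le (hq0 k) _ w).trans (hqB k w))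
      (hrk _) ?_ (by positivity) ?_ z
    · intro w hw
      have hwA : w ∈ A k := Set.mem_of_indicator_ne_zero hw
      have : D w ≤ r/2^k := hwA
      linarith [hrk k]
    · have := sq_nonneg (r/2^k); linarith
  -- the pointwise bound
  have hek : ∀ k z, z ∈ O → (A k)ᶜ.indicator (qs d r y A k) z * (|heat d ((r/2^k)^2) f z| + l) ≤
      (2^m+1) * (Cp * B0) * l / D z * (if r/2^k < D z then r/2^k else 0) := by
    intro k z hz
    have hDz := hDO' z hz
    by_cases hk : r/2^k < D z
    · have hzA : z ∈ (A k)ᶜ := by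
        rw [Set.mem_compl_iff]; intro hh; exact absurd (show D z ≤ r/2^k from hh) (not_le.2 hk)
      rw [Set.indicator_of_mem hzA, if_pos hk]
      cases k with
      | zero => simp at hk; linarith [hDr z]
      | succ k =>
        set ρ := r/2^(k+1) with hρ
        have hρp : 0 < ρ := hrk _
        have h1 : 1 ≤ D z / ρ := by rw [le_div_iff₀ hρp]; linarith
        have h2 : |heat d (ρ^2) f z| + l ≤ (2^m+1) * l * (D z / ρ)^m := by
          have a1 : (1 + D z / ρ)^m ≤ 2^m * (D z/ρ)^m := by
            rw [← mul_pow]; exact pow_le_pow_left₀ (by positivity) (by linarith) m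
          have a2 : 1 ≤ (D z/ρ)^m := one_le_pow₀ h1
          have a3 := hu (k+1) z
          rw [← hρ] at a3
          have a4 := mul_le_mul_of_nonneg_left a1 hl
          have a5 := mul_le_mul_of_nonneg_left a2 hl
          nlinarith
        calc qs d r y A (k+1) z * (|heat d (ρ^2) f z| + l)
            ≤ qs d r y A (k+1) z * ((2^m+1) * l * (D z / ρ)^m) := by
              gcongr
              exact hq0 _ _
          _ = (2^m+1) * l * ((D z / ρ)^(m+1) * qs d r y A (k+1) z) * (ρ / D z) := by
              rw [pow_succ (D z / ρ) m]; field_simp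
          _ ≤ (2^m+1) * l * (Cp * B0) * (ρ / D z) := by
              exact mul_le_mul_of_nonneg_right (mul_le_mul_of_nonneg_left (hdk k z) (by positivity)) (by positivity)
          _ = _ := by ring
    · have hzA : z ∉ (A k)ᶜ := by
        rw [Set.mem_compl_iff, not_not]; exact not_lt.1 hk
      rw [Set.indicator_of_notMem hzA, if_neg hk]; simp
  have hen : ∀ k z, z ∉ O → (A k)ᶜ.indicator (qs d r y A k) z = 0 := by
    intro k z hz
    refine Set.indicator_of_notMem ?_ _
    rw [Set.mem_compl_iff, not_not]
    have : D z = 0 := infDist_zero_of_mem (by simpa using hz)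
    show D z ≤ r/2^k
    rw [this]; exact (hrk k).le
  have hS : ∀ K z, ∑ k ∈ Finset.range K, (A k)ᶜ.indicator (qs d r y A k) z * (|heat d ((r/2^k)^2) f z| + l) ≤
      O.indicator (fun _ => 2 * ((2^m+1) * (Cp * B0)) * l) z := by
    intro K z
    by_cases hz : z ∈ O
    · rw [Set.indicator_of_mem hz]
      refine (Finset.sum_le_sum fun k _ => hek k z hz).trans ?_
      rw [← Finset.mul_sum]
      have hDz := hDO' z hz
      have := dyadic_down (D z) hDz K r hr
      calc _ ≤ (2^m+1) * (Cp * B0) * l / D z * (2 * D z) := by gcongr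
        _ = _ := by field_simp
    · rw [Set.indicator_of_notMem hz]
      apply le_of_eq
      refine Finset.sum_eq_zero fun k _ => ?_
      rw [hen k z hz, zero_mul]
  have h2r : 0 < 2*r^2 := by positivity
  set G : E d → ℝ := fun z => gk d (2*r^2) (y - z) with hG
  have hGi : Integrable G := gk_shift_integrable h2r y
  have hGf : Integrable (fun z => G z * f z) := heat_int h2r hf y
  have hOm := hO.measurableSet
  have key : ∀ K, |heat d (2*r^2) f y - ∫ z in Oᶜ, G z * f z| ≤
      2 * ((2^m+1) * (Cp * B0)) * l * (volume O).toReal + ∫ z in O, qt d r y A K z * |f z| := by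
    intro K
    obtain ⟨ht0, htG, hti, htc⟩ := qt_prop hr y hA K
    set T := qt d r y A K with hT
    have hTB : ∀ z, |T z| ≤ (4 * π * (2*r^2)) ^ (-(d:ℝ)/2) := fun z => by
      rw [abs_of_nonneg (ht0 z)]; exact (htG z).trans (gk_le h2r _)
    have hTf : Integrable (fun z => T z * f z) := bdd_mul_int hti hf hTB
    have tele := qs_tele hr y hA hf K
    have one := qs_one hr y hA K
    rw [← hT] at tele one
    set e : ℕ → E d → ℝ := fun k => (A k)ᶜ.indicator (qs d r y A k) with he
    set u : ℕ → E d → ℝ := fun k => heat d ((r/2^k)^2) f with hudef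
    have hei : ∀ k, Integrable (e k) := fun k => (hqi k).indicator (hA k).compl
    have he0 : ∀ k z, 0 ≤ e k z := fun k z => Set.indicator_nonneg (fun w _ => hq0 k w) z
    have heB : ∀ k z, |e k z| ≤ B0 := fun k z => abs_ind_le (hq0 k) (hqB k) _ z
    have hui : ∀ k, Integrable (u k) := fun k => heat_integrable (by positivity) hf
    have heu : ∀ k, Integrable (fun z => e k z * u k z) := fun k => bdd_mul_int (hei k) (hui k) (heB k)
    have heau : ∀ k, Integrable (fun z => e k z * (|u k z| + l)) := fun k => by
      have := (bdd_mul_int (hei k) (hui k).abs (heB k)).add ((hei k).mul_const l)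
      refine this.congr (Eventually.of_forall fun z => ?_)
      simp only [Pi.add_apply]; ring
    have step1 : |∑ k ∈ Finset.range (K+1), ∫ z, e k z * u k z| + l * ∑ k ∈ Finset.range (K+1), ∫ z, e k z
        ≤ 2 * ((2^m+1) * (Cp * B0)) * l * (volume O).toReal := by
      have a1 : |∑ k ∈ Finset.range (K+1), ∫ z, e k z * u k z| ≤ ∑ k ∈ Finset.range (K+1), ∫ z, e k z * |u k z| := by
        refine (Finset.abs_sum_le_sum_abs _ _).trans (Finset.sum_le_sum fun k _ => ?_)
        refine abs_integral_le_integral_abs.trans (le_of_eq ?_)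
        congr 1; funext z
        rw [abs_mul, abs_of_nonneg (he0 k z)]
      have a2 : (∑ k ∈ Finset.range (K+1), ∫ z, e k z * |u k z|) + l * ∑ k ∈ Finset.range (K+1), ∫ z, e k z
          = ∫ z, ∑ k ∈ Finset.range (K+1), e k z * (|u k z| + l) := by
        rw [integral_finsetSum _ (fun k _ => heau k), Finset.mul_sum, ← Finset.sum_add_distrib]
        refine Finset.sum_congr rfl fun k _ => ?_
        rw [mul_comm l, ← integral_mul_const, ← integral_add (bdd_mul_int (hei k) (hui k).abs (heB k)) ((hei k).mul_const l)]
        congr 1; funext z; ring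
      have a3 : ∫ z, ∑ k ∈ Finset.range (K+1), e k z * (|u k z| + l) ≤
          ∫ z, O.indicator (fun _ => 2 * ((2^m+1) * (Cp * B0)) * l) z := by
        refine integral_mono (integrable_finsetSum _ fun k _ => heau k) ?_ (fun z => hS (K+1) z)
        exact (integrable_indicator_iff hOm).2 (integrableOn_const hvfin)
      rw [integral_indicator hOm, setIntegral_const, smul_eq_mul, Measure.real] at a3
      linarith
    have hsplit : ∫ z, T z * f z = (∫ z in O, T z * f z) + ∫ z in Oᶜ, T z * f z :=
      (integral_add_compl hOm hTf).symm
    have step2 : |∫ z in O, T z * f z| ≤ ∫ z in O, T z * |f z| := by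
      refine abs_integral_le_integral_abs.trans (le_of_eq ?_)
      congr 1; funext z
      rw [abs_mul, abs_of_nonneg (ht0 z)]
    have step3 : |(∫ z in Oᶜ, G z * f z) - ∫ z in Oᶜ, T z * f z| ≤ l * ∑ k ∈ Finset.range (K+1), ∫ z, e k z := by
      rw [← integral_sub hGf.integrableOn hTf.integrableOn]
      have hGT : Integrable (fun z => l * (G z - T z)) := (hGi.sub hti).const_mul l
      calc |∫ z in Oᶜ, (G z * f z - T z * f z)| ≤ ∫ z in Oᶜ, |G z * f z - T z * f z| := abs_integral_le_integral_abs
        _ ≤ ∫ z in Oᶜ, l * (G z - T z) := by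
            refine setIntegral_mono_on_ae (hGf.sub hTf).abs.integrableOn hGT.integrableOn hOm.compl ?_
            filter_upwards [hfl] with z hz hzO
            have h1 := hz hzO
            have h2 : 0 ≤ G z - T z := sub_nonneg.2 (htG z)
            rw [← sub_mul, abs_mul, abs_of_nonneg h2, mul_comm]
            gcongr
        _ ≤ ∫ z, l * (G z - T z) := by
            refine setIntegral_le_integral hGT (Eventually.of_forall fun z => ?_)
            exact mul_nonneg hl (sub_nonneg.2 (htG z))
        _ = l * ∑ k ∈ Finset.range (K+1), ∫ z, e k z := by
            rw [integral_const_mul, integral_sub hGi hti, gk_shift_integral h2r]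
            congr 1
            linarith
    have : heat d (2*r^2) f y - ∫ z in Oᶜ, G z * f z = (∑ k ∈ Finset.range (K+1), ∫ z, e k z * u k z)
        + (∫ z in O, T z * f z) - ((∫ z in Oᶜ, G z * f z) - ∫ z in Oᶜ, T z * f z) := by
      rw [tele, hsplit]; ring
    rw [this]
    refine (abs_sub _ _).trans ?_
    have := abs_add_le (∑ k ∈ Finset.range (K+1), ∫ z, e k z * u k z) (∫ z in O, T z * f z)
    linarith
  have lim : Tendsto (fun K => ∫ z in O, qt d r y A K z * |f z|) atTop (𝓝 0) := by
    have h0 : (0:ℝ) = ∫ z in O, (fun _ => (0:ℝ)) z := by simp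
    rw [h0]
    refine tendsto_integral_of_dominated_convergence (fun z => G z * |f z|) ?_ ?_ ?_ ?_
    · intro K
      exact (((qt_prop hr y hA K).2.2.2.aestronglyMeasurable).mul hf.abs.aestronglyMeasurable).restrict
    · exact (heat_int h2r hf.abs y).integrableOn
    · intro K
      refine Eventually.of_forall fun z => ?_
      obtain ⟨ht0, htG, hti, htc⟩ := qt_prop hr y hA K
      rw [Real.norm_eq_abs, abs_mul, abs_abs, abs_of_nonneg (ht0 z)]
      exact mul_le_mul_of_nonneg_right (htG z) (abs_nonneg _)
    · refine (ae_restrict_iff' hOm).2 (Eventually.of_forall fun z hz => ?_)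
      have hDz := hDO' z hz
      have hb : ∀ K, qt d r y A K z ≤ Cp * B0 * ((r / D z)^(m+1) * ((1/2^(m+1))^K)) := by
        intro K
        have h1 := hdt K z
        have h2 : 0 < (D z / (r/2^K))^(m+1) := by have := hrk K; positivity
        rw [mul_comm, ← le_div_iff₀ h2] at h1
        refine h1.trans (le_of_eq ?_)
        have h3 : (1 / 2^(m+1) : ℝ)^K = (1/2^K)^(m+1) := by
          rw [div_pow, div_pow, one_pow, one_pow, ← pow_mul, ← pow_mul, mul_comm K]
        rw [h3, ← mul_pow, div_eq_mul_inv, ← inv_pow]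
        congr 2
        have := hrk K
        field_simp
      have hl0 : Tendsto (fun K : ℕ => Cp * B0 * ((r / D z)^(m+1) * ((1/2^(m+1):ℝ)^K)) * |f z|) atTop (𝓝 0) := by
        have : Tendsto (fun K : ℕ => (1/2^(m+1):ℝ)^K) atTop (𝓝 0) := by
          refine tendsto_pow_atTop_nhds_zero_of_lt_one (by positivity) ?_
          rw [div_lt_one (by positivity)]
          exact one_lt_pow₀ (by norm_num) (by omega)
        have := ((this.const_mul ((r / D z)^(m+1))).const_mul (Cp * B0)).mul_const |f z|
        simpa using this
      refine squeeze_zero (fun K => mul_nonneg ((qt_prop hr y hA K).1 z) (abs_nonneg _)) (fun K => ?_) hl0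
      exact mul_le_mul_of_nonneg_right (hb K) (abs_nonneg _)
  have := (lim.const_add (2 * ((2^m+1) * (Cp * B0)) * l * (volume O).toReal))
  rw [add_zero] at this
  exact ge_of_tendsto' this key

lemma heat_sub {s : ℝ} (hs : 0 < s) {f g : E d → ℝ} (hf : Integrable f) (hg : Integrable g) (x : E d) :
    heat d s (fun z => f z - g z) x = heat d s f x - heat d s g x := by
  unfold heat
  rw [← integral_sub (heat_int hs hf x) (heat_int hs hg x)]
  congr 1; funext z; ring

lemma heat_L1_le {s : ℝ} (hs : 0 < s) {f : E d → ℝ} (hf : Integrable f) :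
    ∫ x, |heat d s f x| ≤ ∫ x, |f x| := by
  rw [← heat_integral hs hf.abs]
  refine integral_mono (heat_integrable hs hf).abs (heat_integrable hs hf.abs) fun x => ?_
  refine abs_integral_le_integral_abs.trans (le_of_eq ?_)
  unfold heat
  congr 1; funext z
  rw [abs_mul, abs_of_nonneg (gk_nonneg hs _)]

lemma heat_tendsto {g : E d → ℝ} (hg : Integrable g) (hc : Continuous g) {s : ℕ → ℝ} (hs : ∀ k, 0 < s k)
    (hs0 : Tendsto s atTop (𝓝 0)) (x : E d) : Tendsto (fun k => heat d (s k) g x) atTop (𝓝 (g x)) := by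
  obtain ⟨C, hC, hp⟩ := gk_poly d (d+1)
  have hdecay : Tendsto (fun x : E d => ‖x‖ ^ Module.finrank ℝ (E d) * gk d 1 x) (Bornology.cobounded (E d)) (𝓝 0) := by
    have h1 : Tendsto (fun x : E d => (C * (4 * π * (2*1)) ^ (-(d:ℝ)/2)) * ‖x‖⁻¹) (Bornology.cobounded (E d)) (𝓝 0) := by
      have := (tendsto_inv_atTop_zero.comp (tendsto_norm_cobounded_atTop (E := E d))).const_mul (C * (4 * π * (2*1)) ^ (-(d:ℝ)/2))
      simpa using this
    refine squeeze_zero' (Eventually.of_forall fun x => mul_nonneg (by positivity) (gk_nonneg one_pos _)) ?_ h1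
    filter_upwards [tendsto_norm_cobounded_atTop.eventually_gt_atTop 0] with x hx
    rw [finrank_euclideanSpace, Fintype.card_fin]
    have h2 := hp 1 1 x one_pos one_pos (by norm_num)
    have h3 : gk d (2*1) x ≤ (4 * π * (2*1)) ^ (-(d:ℝ)/2) := gk_le (by norm_num) x
    have g0 : 0 ≤ gk d 1 x := gk_nonneg one_pos x
    rw [← div_eq_mul_inv, le_div_iff₀ hx]
    calc ‖x‖^d * gk d 1 x * ‖x‖ = ‖x‖^(d+1) * gk d 1 x := by ring
      _ ≤ (2 + ‖x‖/1)^(d+1) * gk d 1 x := by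
          gcongr; rw [div_one]; linarith
      _ ≤ C * gk d (2*1) x := h2
      _ ≤ _ := by gcongr
  have h := tendsto_integral_comp_smul_smul_of_integrable' (μ := (volume : Measure (E d))) (φ := gk d 1)
    (fun x => gk_nonneg one_pos x) (gk_integral one_pos) hdecay hg (hc.continuousAt (x := x))
  have hs1 : Tendsto (fun k => √(s k)) atTop (𝓝[>] 0) := by
    refine tendsto_nhdsWithin_iff.2 ⟨?_, Eventually.of_forall fun k => Real.sqrt_pos.2 (hs k)⟩
    have := (Real.continuous_sqrt.tendsto 0).comp hs0
    rw [Real.sqrt_zero] at this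
    exact this
  have hc' : Tendsto (fun k => (√(s k))⁻¹) atTop atTop := tendsto_inv_nhdsGT_zero.comp hs1
  refine (h.comp hc').congr fun k => ?_
  simp only [Function.comp_apply, heat, smul_eq_mul]
  congr 1; funext z
  have ht : 0 < √(s k) := Real.sqrt_pos.2 (hs k)
  have h1 := gaussP_eq d ht (x - z)
  have h2 := gaussP_eq d one_pos ((√(s k))⁻¹ • (x - z))
  simp only [Real.one_rpow, inv_one, one_smul, one_mul, one_pow] at h2
  rw [h2, Real.sq_sqrt (hs k).le] at h1
  rw [← h1, finrank_euclideanSpace, Fintype.card_fin, Real.rpow_neg ht.le, Real.rpow_natCast, inv_pow]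

lemma heat_L1_cont {g : E d → ℝ} (hg : Integrable g) (hc : Continuous g) (h0 : ∀ x, 0 ≤ g x) {s : ℕ → ℝ} (hs : ∀ k, 0 < s k)
    (hs0 : Tendsto s atTop (𝓝 0)) : Tendsto (fun k => ∫ x, |g x - heat d (s k) g x|) atTop (𝓝 0) := by
  have e : ∀ k, ∫ x, |g x - heat d (s k) g x| = 2 * ∫ x, max (g x - heat d (s k) g x) 0 := by
    intro k
    have hi : Integrable (fun x => g x - heat d (s k) g x) := hg.sub (heat_integrable (hs k) hg)
    have h1 : ∫ x, (g x - heat d (s k) g x) = 0 := by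
      rw [integral_sub hg (heat_integrable (hs k) hg), heat_integral (hs k) hg, sub_self]
    have h2 : ∫ x, (2 * max (g x - heat d (s k) g x) 0 - (g x - heat d (s k) g x)) = 2 * ∫ x, max (g x - heat d (s k) g x) 0 := by
      rw [integral_sub (hi.pos_part.const_mul 2) hi, integral_const_mul]
      rw [h1, sub_zero]
    rw [← h2]
    congr 1; funext x
    rcases le_total 0 (g x - heat d (s k) g x) with h | h
    · rw [abs_of_nonneg h, max_eq_left h]; ring
    · rw [abs_of_nonpos h, max_eq_right h]; ring
  simp_rw [e]
  suffices hh : Tendsto (fun k => ∫ x, max (g x - heat d (s k) g x) 0) atTop (𝓝 (∫ x : E d, (0:ℝ))) by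
    have := hh.const_mul 2
    simpa using this
  refine tendsto_integral_of_dominated_convergence g ?_ hg ?_ ?_
  · intro k
    exact (hg.sub (heat_integrable (hs k) hg)).pos_part.aestronglyMeasurable
  · intro k
    refine Eventually.of_forall fun x => ?_
    have := heat_nonneg (hs k) h0 x
    rw [Real.norm_eq_abs, abs_of_nonneg (le_max_right _ _)]
    exact max_le (by linarith) (h0 x)
  · refine Eventually.of_forall fun x => ?_
    have := ((heat_tendsto hg hc hs hs0 x).const_sub (g x)).max (tendsto_const_nhds (x := (0:ℝ)))
    simpa using this

lemma heat_L1 {f : E d → ℝ} (hf : Integrable f) {s : ℕ → ℝ} (hs : ∀ k, 0 < s k)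
    (hs0 : Tendsto s atTop (𝓝 0)) : Tendsto (fun k => ∫ x, |f x - heat d (s k) f x|) atTop (𝓝 0) := by
  rw [Metric.tendsto_atTop]
  intro ε hε
  obtain ⟨g, hgc, hgf, hgcont, hg⟩ := hf.exists_hasCompactSupport_integral_sub_le (ε := ε/8) (by positivity)
  simp only [Real.norm_eq_abs] at hgf
  have hp := heat_L1_cont (g := fun x => max (g x) 0) hg.pos_part (by fun_prop) (fun x => le_max_right _ _) hs hs0
  have hn := heat_L1_cont (g := fun x => max (-g x) 0) hg.neg_part (by fun_prop) (fun x => le_max_right _ _) hs hs0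
  have hpn := hp.add hn
  rw [add_zero] at hpn
  obtain ⟨K, hK⟩ := (Metric.tendsto_atTop.1 hpn) (ε/8) (by positivity)
  refine ⟨K, fun k hk => ?_⟩
  have h1 := hK k hk
  have i1 := heat_integrable (hs k) hf
  have i2 := heat_integrable (hs k) hg.pos_part
  have i3 := heat_integrable (hs k) hg.neg_part
  have i4 := heat_integrable (hs k) (hf.sub hg)
  have n0 : 0 ≤ ∫ x, |f x - heat d (s k) f x| := integral_nonneg fun x => abs_nonneg _
  rw [Real.dist_eq, sub_zero] at h1 ⊢
  rw [abs_of_nonneg n0]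
  have h2 := (le_abs_self _).trans_lt h1
  have h3 : ∫ x, |f x - heat d (s k) f x| ≤ ∫ x, (|f x - g x| + |heat d (s k) (fun z => f z - g z) x|
      + (|max (g x) 0 - heat d (s k) (fun x => max (g x) 0) x| + |max (-g x) 0 - heat d (s k) (fun x => max (-g x) 0) x|)) := by
    refine integral_mono (hf.sub i1).abs (((hf.sub hg).abs.add i4.abs).add ((hg.pos_part.sub i2).abs.add (hg.neg_part.sub i3).abs)) fun x => ?_
    beta_reduce
    have e1 : g x = max (g x) 0 - max (-g x) 0 := by
      rcases le_total 0 (g x) with h | h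
      · rw [max_eq_left h, max_eq_right (by linarith)]; ring
      · rw [max_eq_right h, max_eq_left (by linarith)]; ring
    have e2 : heat d (s k) g x = heat d (s k) (fun x => max (g x) 0) x - heat d (s k) (fun x => max (-g x) 0) x := by
      rw [← heat_sub (hs k) hg.pos_part hg.neg_part]
      congr 1; funext z
      rcases le_total 0 (g z) with h | h
      · rw [max_eq_left h, max_eq_right (by linarith)]; ring
      · rw [max_eq_right h, max_eq_left (by linarith)]; ring
    have e3 := heat_sub (hs k) hf hg x
    set a := max (g x) 0
    set b := max (-g x) 0
    set a' := heat d (s k) (fun x => max (g x) 0) x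
    set b' := heat d (s k) (fun x => max (-g x) 0) x
    have e4 : f x - heat d (s k) f x = (f x - g x) - heat d (s k) (fun z => f z - g z) x + ((a - a') - (b - b')) := by
      rw [e3, e2]; linarith
    rw [e4]
    refine (abs_add_le _ _).trans (add_le_add (abs_sub _ _) (abs_sub _ _))
  have h4 := heat_L1_le (hs k) (hf.sub hg)
  have j1 : Integrable (fun x => |f x - g x|) := (hf.sub hg).abs
  have j2 : Integrable (fun x => |heat d (s k) (fun z => f z - g z) x|) := i4.abs
  have j3 : Integrable (fun x => |max (g x) 0 - heat d (s k) (fun x => max (g x) 0) x|) := (hg.pos_part.sub i2).abs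
  have j4 : Integrable (fun x => |max (-g x) 0 - heat d (s k) (fun x => max (-g x) 0) x|) := (hg.neg_part.sub i3).abs
  have e5 : ∫ x, (|f x - g x| + |heat d (s k) (fun z => f z - g z) x|
      + (|max (g x) 0 - heat d (s k) (fun x => max (g x) 0) x| + |max (-g x) 0 - heat d (s k) (fun x => max (-g x) 0) x|))
      = ((∫ x, |f x - g x|) + ∫ x, |heat d (s k) (fun z => f z - g z) x|) +
        ((∫ x, |max (g x) 0 - heat d (s k) (fun x => max (g x) 0) x|) + ∫ x, |max (-g x) 0 - heat d (s k) (fun x => max (-g x) 0) x|) := by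
    rw [← integral_add j1 j2, ← integral_add j3 j4]
    exact integral_add (j1.add j2) (j3.add j4)
  rw [e5] at h3
  have h5 : ∫ x, |heat d (s k) (fun z => f z - g z) x| ≤ ∫ x, |f x - g x| := h4
  linarith

lemma abs_le_sup {f : E d → ℝ} (hf : Integrable f) {r : ℝ} (hr : 0 < r) :
    ∀ᵐ x, ENNReal.ofReal |f x| ≤ ⨆ k : ℕ, ENNReal.ofReal |heat d ((r/2^k)^2) f x| := by
  set s : ℕ → ℝ := fun k => (r/2^k)^2 with hsd
  have hs : ∀ k, 0 < s k := fun k => by simp only [hsd]; positivity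
  have hs0 : Tendsto s atTop (𝓝 0) := by
    have h1 : Tendsto (fun k : ℕ => r * (1/2)^k) atTop (𝓝 (r * 0)) :=
      (_root_.tendsto_pow_atTop_nhds_zero_of_lt_one (by norm_num) (by norm_num)).const_mul r
    have := h1.pow 2
    simp only [mul_zero, ne_eq, OfNat.ofNat_ne_zero, not_false_eq_true, zero_pow] at this
    refine this.congr fun k => ?_
    simp only [hsd]
    rw [div_pow 1 2 k, one_pow, mul_one_div]
  have hL := heat_L1 hf hs hs0
  set W : E d → ℝ≥0∞ := fun x => ⨆ k : ℕ, ENNReal.ofReal |heat d (s k) f x| with hW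
  have hWm : Measurable W := by
    refine Measurable.iSup fun k => ?_
    have := (heat_continuous (d := d) (hs k) hf).measurable
    fun_prop
  have hfm : AEMeasurable (fun x => ENNReal.ofReal |f x|) := by
    have := hf.aestronglyMeasurable.aemeasurable
    fun_prop
  have hz : ∫⁻ x, (ENNReal.ofReal |f x| - W x) = 0 := by
    have hb : ∀ k, ∫⁻ x, (ENNReal.ofReal |f x| - W x) ≤ ENNReal.ofReal (∫ x, |f x - heat d (s k) f x|) := by
      intro k
      have hi : Integrable (fun x => |f x - heat d (s k) f x|) := (hf.sub (heat_integrable (hs k) hf)).abs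
      rw [ofReal_integral_eq_lintegral_ofReal hi (Eventually.of_forall fun x => abs_nonneg _)]
      refine lintegral_mono fun x => ?_
      beta_reduce
      rw [tsub_le_iff_right]
      have h1 : ENNReal.ofReal |heat d (s k) f x| ≤ W x := le_iSup (fun k : ℕ => ENNReal.ofReal |heat d (s k) f x|) k
      refine le_trans ?_ (add_le_add_right h1 _)
      rw [← ENNReal.ofReal_add (abs_nonneg _) (abs_nonneg _)]
      apply ENNReal.ofReal_le_ofReal
      have := abs_add_le (f x - heat d (s k) f x) (heat d (s k) f x)
      simpa using this
    have ht : Tendsto (fun k => ENNReal.ofReal (∫ x, |f x - heat d (s k) f x|)) atTop (𝓝 0) := by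
      have := ENNReal.tendsto_ofReal hL
      simpa using this
    exact le_antisymm (ge_of_tendsto' ht hb) bot_le
  have hz := (lintegral_eq_zero_iff' (hfm.sub hWm.aemeasurable)).1 hz
  filter_upwards [hz] with x hx
  exact tsub_eq_zero_iff_le.1 hx

lemma conv_point (d : ℕ) (hd : 0 < d) (f : E d → ℝ) (fj : ℕ → E d → ℝ) (hf : Integrable f)
    (hfj : ∀ j, Integrable (fj j)) (r M : ℝ) (hr : 0 < r) (hM : 0 ≤ M)
    (hW : ∀ j, ∫⁻ x, (⨆ k : ℕ, ENNReal.ofReal |heat d ((r/2^k)^2) (fj j) x|) ≤ ENNReal.ofReal M)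
    (hae : ∀ᵐ x, Tendsto (fun j => fj j x) atTop (𝓝 (f x))) (y : E d) :
    Tendsto (fun j => heat d (2*r^2) (fj j) y) atTop (𝓝 (heat d (2*r^2) f y)) := by
  obtain ⟨C1, hC1, hlev⟩ := level d hd
  obtain ⟨C2, hC2, hStp⟩ := stp_bound d r hr
  have h2r : 0 < 2*r^2 := by positivity
  set G : E d → ℝ := fun z => gk d (2*r^2) (y - z) with hG
  have hG0 : ∀ z, 0 ≤ G z := fun z => gk_nonneg h2r _
  have hGi : Integrable G := gk_shift_integrable h2r y
  have hGf : Integrable (fun z => G z * f z) := heat_int h2r hf y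
  have hGfj : ∀ j, Integrable (fun z => G z * fj j z) := fun j => heat_int h2r (hfj j) y
  rw [Metric.tendsto_atTop]
  intro ε hε
  obtain ⟨δ, hδ, hab⟩ := exists_pos_setLIntegral_lt_of_measure_lt (μ := (volume : Measure (E d)))
    (f := fun z => ENNReal.ofReal |G z * f z|) (ε := ENNReal.ofReal (ε/4))
    (by
      have := hGf.abs.lintegral_lt_top
      exact this.ne) (by simpa using hε)
  have hlim : Tendsto (fun N : ℕ => C1 * M / N) atTop (𝓝 0) := tendsto_const_div_atTop_nhds_zero_nat _
  have hlim' : Tendsto (fun N : ℕ => ENNReal.ofReal (C1 * M / N)) atTop (𝓝 0) := by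
    simpa using ENNReal.tendsto_ofReal hlim
  have hlim2 : Tendsto (fun N : ℕ => C2 * (C1 * M / N)) atTop (𝓝 0) := by
    simpa using hlim.const_mul C2
  have hball : 0 < volume (ball (0 : E d) r) := measure_ball_pos _ _ hr
  obtain ⟨N, ⟨⟨hN1, hN2⟩, hN3⟩, hN0⟩ := (((hlim'.eventually_lt_const hδ).and (hlim'.eventually_lt_const hball)).and
    (hlim2.eventually_lt_const (show (0:ℝ) < ε/4 by positivity))).and (eventually_gt_atTop 0) |>.exists
  have ha : Tendsto (fun j => ∫ z, G z * min |fj j z - f z| (4^N + |f z|)) atTop (𝓝 (∫ z : E d, (0:ℝ))) := by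
    refine tendsto_integral_of_dominated_convergence (fun z => G z * (4^N + |f z|)) ?_ ?_ ?_ ?_
    · intro j
      have h1 := (hfj j).aestronglyMeasurable
      have h2 := hf.aestronglyMeasurable
      have h3 := hGi.aestronglyMeasurable
      exact h3.mul ((h1.sub h2).norm.inf (aestronglyMeasurable_const.add h2.norm))
    · have := (hGi.mul_const (4^N)).add (heat_int h2r hf.abs y)
      refine this.congr (Eventually.of_forall fun z => ?_)
      simp only [Pi.add_apply, hG]; ring
    · intro j
      refine Eventually.of_forall fun z => ?_
      rw [Real.norm_eq_abs, abs_of_nonneg (mul_nonneg (hG0 z) (le_min (abs_nonneg _) (by positivity)))]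
      exact mul_le_mul_of_nonneg_left (min_le_right _ _) (hG0 z)
    · filter_upwards [hae] with z hz
      have h1 : Tendsto (fun j => |fj j z - f z|) atTop (𝓝 0) := by
        have := (hz.sub_const (f z)).abs
        simpa using this
      have h2 := (h1.min (tendsto_const_nhds (x := (4^N + |f z|)))).const_mul (G z)
      rw [min_eq_left (by positivity), mul_zero] at h2
      exact h2
  rw [integral_zero] at ha
  obtain ⟨J, hJ⟩ := eventually_atTop.1 (ha.eventually_lt_const (show (0:ℝ) < ε/4 by positivity))
  refine ⟨J, fun j hj => ?_⟩
  have hJj := hJ j hj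
  obtain ⟨i, hi, O, hO, hgood, hvol⟩ := hlev (fj j) r M N (hfj j) hr hM hN0 (hW j)
  have h4 : (1:ℝ) ≤ 4^i := one_le_pow₀ (by norm_num)
  have hvol' : volume O ≤ ENNReal.ofReal (C1 * M / N) := by
    refine le_trans ?_ hvol
    calc volume O = 1 * volume O := (one_mul _).symm
      _ ≤ _ := by
        gcongr
        simpa using ENNReal.ofReal_le_ofReal h4
  have hOm := hO.measurableSet
  have hvr : (4^i) * (volume O).toReal ≤ C1 * M / N := by
    have := ENNReal.toReal_mono ENNReal.ofReal_ne_top hvol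
    rwa [ENNReal.toReal_mul, ENNReal.toReal_ofReal (by positivity), ENNReal.toReal_ofReal (by positivity)] at this
  have hfl : ∀ᵐ x, x ∉ O → |fj j x| ≤ 4^i := by
    filter_upwards [abs_le_sup (hfj j) hr] with x hx hxO
    have : (⨆ k : ℕ, ENNReal.ofReal |heat d ((r/2^k)^2) (fj j) x|) ≤ ENNReal.ofReal (4^i) := by
      refine iSup_le fun k => ENNReal.ofReal_le_ofReal ?_
      have := hgood x hxO k x
      simpa using this
    exact (ENNReal.ofReal_le_ofReal_iff (by positivity)).1 (hx.trans this)
  have s1 := hStp (fj j) y (4^i) O (hfj j) (by positivity) hO (hvol'.trans_lt hN2) hgood hfl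
  have s1' : |heat d (2*r^2) (fj j) y - ∫ z in Oᶜ, G z * fj j z| < ε/4 := by
    refine lt_of_le_of_lt (s1.trans ?_) hN3
    rw [mul_assoc]
    gcongr
  have s2 : |(∫ z in Oᶜ, G z * fj j z) - ∫ z in Oᶜ, G z * f z| < ε/4 := by
    refine lt_of_le_of_lt ?_ hJj
    rw [← integral_sub (hGfj j).integrableOn hGf.integrableOn]
    refine abs_integral_le_integral_abs.trans ?_
    have hmi : Integrable (fun z => G z * min |fj j z - f z| (4^N + |f z|)) := by
      have hi0 : Integrable (fun z => G z * |fj j z - f z|) := heat_int h2r ((hfj j).sub hf).abs y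
      refine hi0.mono' ?_ ?_
      · exact hGi.aestronglyMeasurable.mul (((hfj j).aestronglyMeasurable.sub hf.aestronglyMeasurable).norm.inf (aestronglyMeasurable_const.add hf.aestronglyMeasurable.norm))
      · refine Eventually.of_forall fun z => ?_
        rw [Real.norm_eq_abs, abs_of_nonneg (mul_nonneg (hG0 z) (le_min (abs_nonneg _) (by positivity)))]
        exact mul_le_mul_of_nonneg_left (min_le_left _ _) (hG0 z)
    refine le_trans ?_ (setIntegral_le_integral (s := Oᶜ) hmi (Eventually.of_forall fun z => mul_nonneg (hG0 z) (le_min (abs_nonneg _) (by positivity))))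
    refine setIntegral_mono_on_ae ((hGfj j).sub hGf).abs.integrableOn hmi.integrableOn hOm.compl ?_
    filter_upwards [hfl] with z hz hzO
    rw [← mul_sub, abs_mul, abs_of_nonneg (hG0 z)]
    refine mul_le_mul_of_nonneg_left (le_min le_rfl ?_) (hG0 z)
    refine (abs_sub _ _).trans (add_le_add ((hz hzO).trans ?_) le_rfl)
    exact pow_le_pow_right₀ (by norm_num) hi.le
  have s3 : |∫ z in O, G z * f z| < ε/4 := by
    have h := hab O (hvol'.trans_lt hN1)
    have e : ∫⁻ z in O, ENNReal.ofReal |G z * f z| = ENNReal.ofReal (∫ z in O, |G z * f z|) :=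
      (ofReal_integral_eq_lintegral_ofReal hGf.abs.integrableOn (Eventually.of_forall fun z => abs_nonneg _)).symm
    rw [e] at h
    have h' := (ENNReal.ofReal_lt_ofReal_iff (by positivity)).1 h
    exact abs_integral_le_integral_abs.trans_lt h'
  have hsplit : heat d (2*r^2) f y = (∫ z in O, G z * f z) + ∫ z in Oᶜ, G z * f z :=
    (integral_add_compl hOm hGf).symm
  rw [Real.dist_eq, hsplit]
  rw [abs_lt] at s1' s2 s3 ⊢
  constructor <;> linarith

lemma MnMax_eq (d : ℕ) (n : ℤ) (f : E d → ℝ) (x : E d) : MnMax d n f x =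
    ⨆ (t : ℝ) (_ : 0 < t ∧ t < (2:ℝ) ^ (-(n:ℝ)/2)), ENNReal.ofReal |heat d (t^2) f x| := by
  unfold MnMax
  refine iSup_congr fun t => iSup_congr fun ht => ?_
  congr 2
  unfold heat
  congr 1; funext z
  rw [gaussP_eq d ht.1]

lemma MnMax_measurable (d : ℕ) (n : ℤ) {f : E d → ℝ} (hf : Integrable f) : Measurable (MnMax d n f) := by
  have : LowerSemicontinuous (MnMax d n f) := by
    have e : MnMax d n f = fun x => ⨆ (t : ℝ) (_ : 0 < t ∧ t < (2:ℝ) ^ (-(n:ℝ)/2)), ENNReal.ofReal |heat d (t^2) f x| := by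
      funext x; exact MnMax_eq d n f x
    rw [e]
    refine lowerSemicontinuous_iSup fun t => lowerSemicontinuous_iSup fun ht => ?_
    have h1 := heat_continuous (d := d) (s := t^2) (by have := ht.1; positivity) hf
    exact (ENNReal.continuous_ofReal.comp h1.abs).lowerSemicontinuous
  exact this.measurable

lemma sup_le_MnMax (d : ℕ) (n : ℤ) (f : E d → ℝ) {r : ℝ} (hr : 0 < r) (hr' : r < (2:ℝ) ^ (-(n:ℝ)/2)) (x : E d) :
    (⨆ k : ℕ, ENNReal.ofReal |heat d ((r/2^k)^2) f x|) ≤ MnMax d n f x := by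
  rw [MnMax_eq]
  refine iSup_le fun k => ?_
  refine le_iSup₂ (f := fun (t : ℝ) (_ : 0 < t ∧ t < (2:ℝ) ^ (-(n:ℝ)/2)) => ENNReal.ofReal |heat d (t^2) f x|) (r/2^k) ⟨by positivity, ?_⟩
  exact lt_of_le_of_lt (div_le_self hr.le (one_le_pow₀ (by norm_num))) hr'

lemma heat_lip (d : ℕ) : ∃ C : ℝ, 0 < C ∧ ∀ (φ : E d → ℝ) (L t : ℝ), Integrable φ → 0 ≤ L → (∀ x y, |φ x - φ y| ≤ L * ‖x - y‖) →
    0 < t → ∀ x, |heat d (t^2) φ x - φ x| ≤ C * L * t := by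
  obtain ⟨C, hC, hp⟩ := gk_poly d 1
  refine ⟨C, hC, ?_⟩
  intro φ L t hφ hL hlip ht x
  have hs : 0 < t^2 := by positivity
  have hi := heat_int hs hφ x
  have hi2 : Integrable (fun z => gk d (t^2) (x - z) * φ x) := (gk_shift_integrable hs x).mul_const _
  have e : heat d (t^2) φ x - φ x = ∫ z, gk d (t^2) (x - z) * (φ z - φ x) := by
    have h1 : φ x = ∫ z, gk d (t^2) (x - z) * φ x := by
      rw [integral_mul_const, gk_shift_integral hs, one_mul]
    have h2 : heat d (t^2) φ x - ∫ z, gk d (t^2) (x - z) * φ x = ∫ z, gk d (t^2) (x - z) * (φ z - φ x) := by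
      unfold heat
      rw [← integral_sub hi hi2]
      congr 1; funext z; ring
    rw [← h2, ← h1]
  rw [e]
  refine abs_integral_le_integral_abs.trans ?_
  have e2 : C * L * t = ∫ z, C * L * t * gk d (2*t^2) (x - z) := by
    rw [integral_const_mul, gk_shift_integral (by positivity), mul_one]
  rw [e2]
  have hi3 : Integrable (fun z => |gk d (t^2) (x - z) * (φ z - φ x)|) := by
    refine (hi.sub hi2).abs.congr (Eventually.of_forall fun z => ?_)
    simp only [Pi.sub_apply]
    rw [mul_sub]
  refine integral_mono hi3 ((gk_shift_integrable (by positivity) x).const_mul _) fun z => ?_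
  beta_reduce
  have g0 := gk_nonneg hs (x - z)
  rw [abs_mul, abs_of_nonneg g0]
  have h1 := hp (t^2) t (x - z) hs ht (by nlinarith)
  rw [pow_one] at h1
  have h2 := hlip z x
  rw [norm_sub_rev] at h2
  calc gk d (t^2) (x - z) * |φ z - φ x| ≤ gk d (t^2) (x - z) * (L * ‖x - z‖) := by gcongr
    _ = L * t * ((‖x - z‖ / t) * gk d (t^2) (x - z)) := by field_simp
    _ ≤ L * t * ((2 + ‖x - z‖ / t) * gk d (t^2) (x - z)) := by gcongr; linarith
    _ ≤ L * t * (C * gk d (2 * t^2) (x - z)) := mul_le_mul_of_nonneg_left h1 (by positivity)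
    _ = _ := by ring

lemma test_diff {C L t : ℝ} {φ g : E d → ℝ} (hg : Integrable g) (hφ : Integrable φ) {B : ℝ} (hB : ∀ x, |φ x| ≤ B)
    (ht : 0 < t) (h : ∀ x, |heat d (t^2) φ x - φ x| ≤ C * L * t) :
    |(∫ x, g x * φ x) - ∫ x, heat d (t^2) g x * φ x| ≤ C * L * t * ∫ x, |g x| := by
  have hs : 0 < t^2 := by positivity
  have h1 : ∫ x, heat d (t^2) g x * φ x = ∫ x, heat d (t^2) φ x * g x := by
    rw [← heat_symm hs hg hφ.aestronglyMeasurable B hB]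
    congr 1; funext x; ring
  have i1 : Integrable (fun x => g x * φ x) := by
    refine (bdd_mul_int hφ hg hB).congr (Eventually.of_forall fun x => mul_comm _ _)
  have i2 : Integrable (fun x => heat d (t^2) φ x * g x) :=
    bdd_mul_int (heat_integrable hs hφ) hg (heat_abs_le hs hφ)
  rw [h1, ← integral_sub i1 i2, ← integral_const_mul]
  refine abs_integral_le_integral_abs.trans (integral_mono (i1.sub i2).abs (hg.abs.const_mul _) fun x => ?_)
  beta_reduce
  have e : g x * φ x - heat d (t^2) φ x * g x = -(heat d (t^2) φ x - φ x) * g x := by ring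
  rw [e, abs_mul, abs_neg]
  exact mul_le_mul_of_nonneg_right (h x) (abs_nonneg _)


end

/-- Weak`*`-convergence in `h^1_n`: a bounded sequence in `h^1_n` converging a.e.
has limit in `h^1_n`, with norm at most the liminf of the norms, and converges against
every `φ ∈ C_c^∞`. -/
theorem stmt17 (d : ℕ) (hd : 3 ≤ d) (n : ℤ) (f : E d → ℝ) (fj : ℕ → E d → ℝ)
    (hmem : ∀ j, Memh1n d n (fj j))
    (M : ℝ) (hM : ∀ j, (h1nNorm d n (fj j)).toReal ≤ M)
    (hae : ∀ᵐ x ∂(volume : Measure (E d)),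
      Filter.Tendsto (fun j => fj j x) Filter.atTop (nhds (f x))) :
    Memh1n d n f ∧
    h1nNorm d n f ≤ Filter.liminf (fun j => h1nNorm d n (fj j)) Filter.atTop ∧
    ∀ φ : E d → ℝ, ContDiff ℝ (⊤ : ℕ∞) φ → HasCompactSupport φ →
      Filter.Tendsto (fun j => ∫ x, fj j x * φ x) Filter.atTop
        (nhds (∫ x, f x * φ x)) := by
  have hd0 : 0 < d := by omega
  set R : ℝ := (2:ℝ) ^ (-(n:ℝ)/2) with hR
  have hRp : 0 < R := by positivity
  have hM0 : 0 ≤ M := ENNReal.toReal_nonneg.trans (hM 0)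
  have hfj : ∀ j, Integrable (fj j) := fun j => (hmem j).1
  have hnorm : ∀ j, h1nNorm d n (fj j) ≤ ENNReal.ofReal M := fun j => by
    rw [← ENNReal.ofReal_toReal (hmem j).2.ne]
    exact ENNReal.ofReal_le_ofReal (hM j)
  have hW : ∀ r, 0 < r → r < R → ∀ j, ∫⁻ x, (⨆ k : ℕ, ENNReal.ofReal |heat d ((r/2^k)^2) (fj j) x|) ≤ ENNReal.ofReal M :=
    fun r hr hr' j => (lintegral_mono fun x => sup_le_MnMax d n (fj j) hr hr' x).trans (hnorm j)
  have hL1 : ∀ j, ∫⁻ x, ENNReal.ofReal |fj j x| ≤ ENNReal.ofReal M := fun j =>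
    (lintegral_mono_ae (abs_le_sup (hfj j) (r := R/2) (by positivity))).trans (hW (R/2) (by positivity) (by linarith) j)
  have hL1' : ∀ j, ∫ x, |fj j x| ≤ M := fun j => by
    have := hL1 j
    rw [← ofReal_integral_eq_lintegral_ofReal (hfj j).abs (Eventually.of_forall fun x => abs_nonneg _)] at this
    exact (ENNReal.ofReal_le_ofReal_iff hM0).1 this
  have hf : Integrable f := by
    have hm : AEStronglyMeasurable f volume :=
      aestronglyMeasurable_of_tendsto_ae atTop (fun j => (hfj j).aestronglyMeasurable) hae
    refine memLp_one_iff_integrable.1 ⟨hm, ?_⟩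
    refine (Lp.eLpNorm_lim_le_liminf_eLpNorm (p := 1) (fun j => (hfj j).aestronglyMeasurable) f hae).trans_lt ?_
    have : liminf (fun j => eLpNorm (fj j) 1 volume) atTop ≤ ENNReal.ofReal M := by
      refine liminf_le_of_frequently_le' (Frequently.of_forall fun j => ?_)
      rw [eLpNorm_one_eq_lintegral_enorm]
      simp_rw [← ofReal_norm_eq_enorm, Real.norm_eq_abs]
      exact hL1 j
    exact this.trans_lt ENNReal.ofReal_lt_top
  have hconv : ∀ t, 0 < t → t < R → ∀ y, Tendsto (fun j => heat d (t^2) (fj j) y) atTop (𝓝 (heat d (t^2) f y)) := by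
    intro t ht htR y
    have h2 : (1:ℝ) < √2 := by
      rw [Real.lt_sqrt] <;> norm_num
    have hr : 0 < t / √2 := by positivity
    have hrt : t / √2 < R := (div_lt_self ht h2).trans htR
    have := conv_point d hd0 f fj hf hfj (t/√2) M hr hM0 (hW _ hr hrt) hae y
    have e : 2 * (t/√2)^2 = t^2 := by
      rw [div_pow, Real.sq_sqrt (by norm_num)]; ring
    rwa [e] at this
  have hle : h1nNorm d n f ≤ liminf (fun j => h1nNorm d n (fj j)) atTop := by
    unfold h1nNorm
    refine le_trans (lintegral_mono fun x => ?_) (lintegral_liminf_le fun j => MnMax_measurable d n (hfj j))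
    beta_reduce
    rw [MnMax_eq]
    refine iSup₂_le fun t ht => ?_
    have h1 : Tendsto (fun j => ENNReal.ofReal |heat d (t^2) (fj j) x|) atTop (𝓝 (ENNReal.ofReal |heat d (t^2) f x|)) :=
      ENNReal.tendsto_ofReal (hconv t ht.1 ht.2 x).abs
    rw [← h1.liminf_eq]
    refine liminf_le_liminf (Eventually.of_forall fun j => ?_)
    beta_reduce
    rw [MnMax_eq]
    exact le_iSup₂ (f := fun (t : ℝ) (_ : 0 < t ∧ t < (2:ℝ) ^ (-(n:ℝ)/2)) => ENNReal.ofReal |heat d (t^2) (fj j) x|) t ht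
  refine ⟨⟨hf, ?_⟩, hle, ?_⟩
  · refine hle.trans_lt (lt_of_le_of_lt ?_ (ENNReal.ofReal_lt_top (r := M)))
    exact liminf_le_of_frequently_le' (Frequently.of_forall fun j => hnorm j)
  · intro φ hφ hφc
    have hφi : Integrable φ := hφ.continuous.integrable_of_hasCompactSupport hφc
    obtain ⟨B, hB⟩ := hφc.exists_bound_of_continuous hφ.continuous
    obtain ⟨L, hL⟩ := hφ.lipschitzWith_of_hasCompactSupport hφc (by simp)
    obtain ⟨C, hC, hlip⟩ := heat_lip d
    have hL' : ∀ x y, |φ x - φ y| ≤ (L:ℝ) * ‖x - y‖ := fun x y => by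
      have := hL.dist_le_mul x y
      rwa [Real.dist_eq, dist_eq_norm] at this
    set M' : ℝ := M + ∫ x, |f x| with hM'
    have hf0 : 0 ≤ ∫ x, |f x| := integral_nonneg fun x => abs_nonneg _
    have hM'0 : 0 ≤ M' := by positivity
    rw [Metric.tendsto_atTop]
    intro ε hε
    have hLn : (0:ℝ) ≤ L := L.2
    set t : ℝ := min (R/2) (ε / (4 * (C * L * M' + 1))) with ht
    have htp : 0 < t := lt_min (by positivity) (by positivity)
    have htR : t < R := (min_le_left _ _).trans_lt (by linarith)
    have hte : C * L * t * M' < ε/3 := by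
      have h1 : t ≤ ε / (4 * (C * L * M' + 1)) := min_le_right _ _
      have h2 : 0 < 4 * (C * L * M' + 1) := by positivity
      rw [le_div_iff₀ h2] at h1
      nlinarith
    have hl := hlip φ L t hφi hLn hL' htp
    have hs : 0 < t^2 := by positivity
    have hlim : Tendsto (fun j => ∫ x, heat d (t^2) (fj j) x * φ x) atTop (𝓝 (∫ x, heat d (t^2) f x * φ x)) := by
      refine tendsto_integral_of_dominated_convergence (fun x => (4 * π * t^2) ^ (-(d:ℝ)/2) * M * |φ x|) ?_ ?_ ?_ ?_
      · intro j
        exact (heat_continuous hs (hfj j)).aestronglyMeasurable.mul hφi.aestronglyMeasurable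
      · exact hφi.abs.const_mul _
      · intro j
        refine Eventually.of_forall fun x => ?_
        rw [Real.norm_eq_abs, abs_mul]
        refine mul_le_mul_of_nonneg_right ((heat_abs_le hs (hfj j) x).trans ?_) (abs_nonneg _)
        exact mul_le_mul_of_nonneg_left (hL1' j) (by positivity)
      · exact Eventually.of_forall fun x => (hconv t htp htR x).mul_const _
    obtain ⟨J, hJ⟩ := (Metric.tendsto_atTop.1 hlim) (ε/3) (by positivity)
    refine ⟨J, fun j hj => ?_⟩
    have h1 := hJ j hj
    have h2 := test_diff (hfj j) hφi hB htp hl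
    have h3 := test_diff hf hφi hB htp hl
    have h2' : C * L * t * ∫ x, |fj j x| ≤ C * L * t * M' := by
      refine mul_le_mul_of_nonneg_left ?_ (by positivity)
      linarith [hL1' j]
    have h3' : C * L * t * ∫ x, |f x| ≤ C * L * t * M' := by
      refine mul_le_mul_of_nonneg_left ?_ (by positivity)
      linarith
    have h2'' := (h2.trans h2').trans_lt hte
    have h3'' := (h3.trans h3').trans_lt hte
    rw [Real.dist_eq] at h1 ⊢
    rw [abs_lt] at h1 h2'' h3'' ⊢
    constructor <;> linarith
end
end
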